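/- Minimum principle for Lagrangian graphs: Let D ⊂ ℝⁿ be a bounded domain, I ⊂ ℝ an open interval, and c ∈ [nπ/2, (n+1)π/2). If u ∈ ℱ_c(I × D), then the function v(x) := inf_{t ∈ I} u(t, x) belongs to F_{c−π/2}(D) (in particular, either v ≡ −∞, which by convention is of type F_{c−π/2}, or v is a finite-valued function of type F_{c−π/2} on D). -/

import Mathlib

open Real Filter Matrix

noncomputable section

/-- The Hessian matrix of a function `v : ℝ^m → ℝ` at `x`. -/
def hessianMatrix {m : ℕ} (v : (Fin m → ℝ) → ℝ) (x : Fin m → ℝ) :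
    Matrix (Fin m) (Fin m) ℝ :=
  Matrix.of fun i j => iteratedFDeriv ℝ 2 v x ![Pi.single i 1, Pi.single j 1]

/-- The lifted Lagrangian angle θ̃(A) = ∑ arctan λ_j(A) of a real symmetric matrix. -/
def liftedAngle {m : ℕ} (A : Matrix (Fin m) (Fin m) ℝ) : ℝ :=
  if h : A.IsHermitian then ∑ j, Real.arctan (h.eigenvalues j) else 0

/-- The Harvey–Lawson branches `F_c` of the special Lagrangian subequation. -/
def Fc (m : ℕ) (c : ℝ) : Set (Matrix (Fin m) (Fin m) ℝ) :=
  {A | A.IsSymm ∧ c ≤ liftedAngle A}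

/-- `I_n = diag(0,1,…,1)` as a complex `(n+1)×(n+1)` matrix. -/
def Inmat (n : ℕ) : Matrix (Fin (n+1)) (Fin (n+1)) ℂ :=
  Matrix.diagonal fun i => if i = 0 then 0 else 1

/-- The complex matrix `I_n + i A`. -/
def cmat {n : ℕ} (A : Matrix (Fin (n+1)) (Fin (n+1)) ℝ) :
    Matrix (Fin (n+1)) (Fin (n+1)) ℂ :=
  Inmat n + Complex.I • A.map (fun a => (a : ℂ))

open Classical in
/-- The lifted space-time Lagrangian angle Θ̃, summing `Complex.arg` (with values in
`(-π, π]`) over the roots (with multiplicity) of the characteristic polynomial of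
`I_n + i A`, shifted by `π/2` over the singular set `S = {det (I_n + iA) = 0}` where only
the nonzero roots are counted. -/
def spaceTimeAngle {n : ℕ} (A : Matrix (Fin (n+1)) (Fin (n+1)) ℝ) : ℝ :=
  if (cmat A).det = 0 then
    π / 2 + ((((cmat A).charpoly.roots).filter (fun z => z ≠ 0)).map Complex.arg).sum
  else (((cmat A).charpoly.roots).map Complex.arg).sum

/-- The degenerate special Lagrangian subequation `ℱ_c ⊂ Sym(ℝ^{n+1})`. -/
def calF (n : ℕ) (c : ℝ) : Set (Matrix (Fin (n+1)) (Fin (n+1)) ℝ) :=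
  {A | A.IsSymm ∧ c ≤ spaceTimeAngle A}

/-- Interior of a set of symmetric matrices, relative to the symmetric matrices. -/
def symInterior {m : ℕ} (F : Set (Matrix (Fin m) (Fin m) ℝ)) :
    Set (Matrix (Fin m) (Fin m) ℝ) :=
  {A | A.IsSymm ∧ ∀ᶠ B in nhds A, B.IsSymm → B ∈ F}

/-- The dual subequation `F̃ = (−Int F)ᶜ` (within the symmetric matrices). -/
def dualSub {m : ℕ} (F : Set (Matrix (Fin m) (Fin m) ℝ)) :
    Set (Matrix (Fin m) (Fin m) ℝ) :=
  {A | A.IsSymm ∧ -A ∉ symInterior F}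

/-- An `EReal`-valued (i.e. `[−∞,∞)`-valued) function is subaffine on `U` if, for every
affine function `a` and compact `K ⊆ U`, `u ≤ a` on `∂K` implies `u ≤ a` on `K`. -/
def IsSubaffine {m : ℕ} (U : Set (Fin m → ℝ)) (u : (Fin m → ℝ) → EReal) : Prop :=
  ∀ (a : (Fin m → ℝ) →ᵃ[ℝ] ℝ) (K : Set (Fin m → ℝ)), IsCompact K → K ⊆ U →
    (∀ x ∈ frontier K, u x ≤ (a x : EReal)) → ∀ x ∈ K, u x ≤ (a x : EReal)

/-- `u` is of type `F` on `U` (i.e. `u ∈ F(U)`): `u` is `[−∞,∞)`-valued, upper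
semicontinuous on `U`, and `u + v` is subaffine on `U` for every `C²` function `v`
whose Hessian lies in the dual subequation `F̃` at every point of `U`. -/
def IsTypeF {m : ℕ} (F : Set (Matrix (Fin m) (Fin m) ℝ)) (U : Set (Fin m → ℝ))
    (u : (Fin m → ℝ) → EReal) : Prop :=
  (∀ x ∈ U, u x ≠ ⊤) ∧ UpperSemicontinuousOn u U ∧
    ∀ v : (Fin m → ℝ) → ℝ, ContDiffOn ℝ 2 v U →
      (∀ x ∈ U, hessianMatrix v x ∈ dualSub F) →
      IsSubaffine U (fun x => u x + ((v x : ℝ) : EReal))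

/-- The lower-right `n×n` block `A⁺` of an `(n+1)×(n+1)` matrix. -/
def Aplus {n : ℕ} (A : Matrix (Fin (n+1)) (Fin (n+1)) ℝ) : Matrix (Fin n) (Fin n) ℝ :=
  Matrix.of fun i j => A i.succ j.succ

end

/-!
A function of type `F` is recognised by the quadratic functions touching it from above, so suppose
that `v = inf_t u` lies, on a small sphere around `x₀`, strictly below a quadratic `φ` with
`φ(x₀) < v(x₀)` whose Hessian `B` has angle less than `c - π/2`. Since `c ≥ nπ/2`, no barrier
concave in `t` has its Hessian in `ℱ_c`, so `u(·, x)` has no strict local maximum and the fibres of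
`{u < φ}` are intervals. Matrices of angle at least `c - π/2` are positive semidefinite, where the
angle is concave; this yields a positive definite `M` such that `angle S - angle B ≤ tr (M (S - B))`
for all of them. By selection and polynomial approximation, followed by the solution of a Dirichlet
problem with polynomial data, there is an `M`-harmonic `h` whose graph over the sphere lies in
`{u < φ}`. The barrier `φ(x) + (N/2)(t - h(x))²` has space-time angle `π/2` plus the angle of
`S = B - N(t - h(x))∇²h(x)`, the Schur complement of its `t`-entry, and `tr (M (S - B)) = 0` keeps
that below `c`. Comparison on a thin tube around the graph gives `u(h(x₀), x₀) ≤ φ(x₀) < v(x₀)`,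
which is absurd.
-/

section Hessian

variable {m : ℕ} {f g : (Fin m → ℝ) → ℝ} {x : Fin m → ℝ}

theorem dotProduct_mulVec_comm_of_isSymm {A : Matrix (Fin m) (Fin m) ℝ} (hA : A.IsSymm)
    (x y : Fin m → ℝ) : x ⬝ᵥ A *ᵥ y = y ⬝ᵥ A *ᵥ x := by
  rw [dotProduct_mulVec, ← mulVec_transpose, hA.eq, dotProduct_comm]

theorem hessianMatrix_apply (f : (Fin m → ℝ) → ℝ) (x : Fin m → ℝ) (i j : Fin m) :
    hessianMatrix f x i j = fderiv ℝ (fderiv ℝ f) x (Pi.single i 1) (Pi.single j 1) := by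
  simp [hessianMatrix, iteratedFDeriv_two_apply]

theorem dotProduct_hessianMatrix_mulVec (f : (Fin m → ℝ) → ℝ) (x v w : Fin m → ℝ) :
    v ⬝ᵥ hessianMatrix f x *ᵥ w = fderiv ℝ (fderiv ℝ f) x v w := by
  conv_rhs => rw [pi_eq_sum_univ' v, pi_eq_sum_univ' w]
  simp only [dotProduct, mulVec, hessianMatrix_apply, map_sum, map_smul, smul_eq_mul,
    _root_.sum_apply, _root_.smul_apply, Finset.mul_sum]
  rw [Finset.sum_comm]
  exact Finset.sum_congr rfl fun i _ => Finset.sum_congr rfl fun j _ => by ring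

theorem isSymm_hessianMatrix (hf : ContDiffAt ℝ 2 f x) : (hessianMatrix f x).IsSymm := by
  ext i j
  simpa only [transpose_apply, hessianMatrix_apply] using
    (hf.isSymmSndFDerivAt (by simp)).eq (Pi.single j 1) (Pi.single i 1)

theorem hessianMatrix_eq_of_hasFDerivAt {f' : (Fin m → ℝ) → (Fin m → ℝ) →L[ℝ] ℝ}
    {f'' : (Fin m → ℝ) →L[ℝ] (Fin m → ℝ) →L[ℝ] ℝ} (hf : ∀ y, HasFDerivAt f (f' y) y)
    (hf' : HasFDerivAt f' f'' x) :
    hessianMatrix f x = Matrix.of fun i j => f'' (Pi.single i 1) (Pi.single j 1) := by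
  ext i j
  rw [hessianMatrix_apply, funext fun y => (hf y).fderiv, hf'.fderiv, of_apply]

theorem hessianMatrix_neg (f : (Fin m → ℝ) → ℝ) (x : Fin m → ℝ) :
    hessianMatrix (fun y => -f y) x = -hessianMatrix f x := by
  ext i j
  exact congr($(iteratedFDeriv_neg_apply (𝕜 := ℝ) (f := f) (x := x) (i := 2)) _)

theorem hessianMatrix_add (hf : ContDiffAt ℝ 2 f x) (hg : ContDiffAt ℝ 2 g x) :
    hessianMatrix (fun y => f y + g y) x = hessianMatrix f x + hessianMatrix g x := by
  ext i j
  exact congr($(iteratedFDeriv_add_apply (i := 2) hf hg) _)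

theorem hessianMatrix_const_mul (c : ℝ) (hf : ContDiffAt ℝ 2 f x) :
    hessianMatrix (fun y => c * f y) x = c • hessianMatrix f x := by
  ext i j
  exact congr($(iteratedFDeriv_const_smul_apply (i := 2) (a := c) hf) _)

theorem hessianMatrix_sub (hf : ContDiffAt ℝ 2 f x) (hg : ContDiffAt ℝ 2 g x) :
    hessianMatrix (fun y => f y - g y) x = hessianMatrix f x - hessianMatrix g x := by
  simpa only [sub_eq_add_neg, hessianMatrix_neg] using hessianMatrix_add hf hg.neg

end Hessian

section Quadratic

variable {m : ℕ}

/-- The quadratic function with value `a`, derivative `L` and (for symmetric `A`) Hessian `A`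
at `x₀`. -/
noncomputable def quadraticAt (x₀ : Fin m → ℝ) (a : ℝ) (L : (Fin m → ℝ) →L[ℝ] ℝ)
    (A : Matrix (Fin m) (Fin m) ℝ) (x : Fin m → ℝ) : ℝ :=
  a + L (x - x₀) + 1 / 2 * ((x - x₀) ⬝ᵥ A *ᵥ (x - x₀))

variable {x₀ : Fin m → ℝ} {a : ℝ} {L : (Fin m → ℝ) →L[ℝ] ℝ} {A B : Matrix (Fin m) (Fin m) ℝ}

theorem quadraticAt_self : quadraticAt x₀ a L A x₀ = a := by
  simp [quadraticAt]

theorem quadraticAt_add_smul_one (c : ℝ) (x : Fin m → ℝ) :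
    quadraticAt x₀ a L (A + c • 1) x
      = quadraticAt x₀ a L A x + c / 2 * ((x - x₀) ⬝ᵥ (x - x₀)) := by
  simp only [quadraticAt, add_mulVec, smul_mulVec, one_mulVec, dotProduct_add, dotProduct_smul,
    smul_eq_mul]
  ring

theorem hasFDerivAt_quadraticAt (hA : A.IsSymm) (x : Fin m → ℝ) :
    HasFDerivAt (quadraticAt x₀ a L A)
      (L + (toLinearMap₂' ℝ A).toContinuousBilinearMap (x - x₀)) x := by
  set b := ((toLinearMap₂' ℝ A).toContinuousBilinearMap :
    (Fin m → ℝ) →L[ℝ] (Fin m → ℝ) →L[ℝ] ℝ)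
  have hb (v w : Fin m → ℝ) : b v w = v ⬝ᵥ A *ᵥ w := toLinearMap₂'_apply' A v w
  have hsub : HasFDerivAt (fun y => y - x₀) (ContinuousLinearMap.id ℝ _) x :=
    (hasFDerivAt_id x).sub_const x₀
  have hquad := ((L.hasFDerivAt.comp x hsub).const_add a).add
    ((b.hasFDerivAt_of_bilinear hsub hsub).const_mul (1 / 2))
  refine (hquad.congr_fderiv ?_).congr_of_eventuallyEq
    (.of_forall fun y => by simp [quadraticAt, hb, add_assoc])
  ext1 v
  simp [hb, dotProduct_mulVec_comm_of_isSymm hA v]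
  ring

theorem hessianMatrix_quadraticAt (hA : A.IsSymm) (x : Fin m → ℝ) :
    hessianMatrix (quadraticAt x₀ a L A) x = A := by
  set b := ((toLinearMap₂' ℝ A).toContinuousBilinearMap :
    (Fin m → ℝ) →L[ℝ] (Fin m → ℝ) →L[ℝ] ℝ)
  have hderiv : HasFDerivAt (fun y => L + b (y - x₀)) b x :=
    (b.hasFDerivAt.comp x ((hasFDerivAt_id x).sub_const x₀)).const_add L
  rw [hessianMatrix_eq_of_hasFDerivAt (hasFDerivAt_quadraticAt hA) hderiv]
  ext i j
  exact (toLinearMap₂'_apply' A _ _).trans (by simp)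

theorem contDiff_dotProduct_mulVec (A : Matrix (Fin m) (Fin m) ℝ) {k : WithTop ℕ∞} :
    ContDiff ℝ k fun x : Fin m → ℝ => x ⬝ᵥ A *ᵥ x := by
  simp only [dotProduct, mulVec]
  fun_prop

theorem contDiff_quadraticAt {k : WithTop ℕ∞} : ContDiff ℝ k (quadraticAt x₀ a L A) := by
  have hsub : ContDiff ℝ k fun x : Fin m → ℝ => x - x₀ := contDiff_id.sub contDiff_const
  exact (contDiff_const.add (L.contDiff.comp hsub)).add
    (contDiff_const.mul ((contDiff_dotProduct_mulVec A).comp hsub))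

end Quadratic

section Taylor

theorem eventually_abs_sub_taylor_two_le {E : Type*} [NormedAddCommGroup E] [NormedSpace ℝ E]
    {f : E → ℝ} {f' : E → E →L[ℝ] ℝ} {f'' : E →L[ℝ] E →L[ℝ] ℝ} {x₀ : E}
    (hf : ∀ᶠ x in nhds x₀, HasFDerivAt f (f' x) x) (hf' : HasFDerivAt f' f'' x₀)
    {ε : ℝ} (hε : 0 < ε) :
    ∀ᶠ x in nhds x₀,
      |f x - (f x₀ + f' x₀ (x - x₀) + 1 / 2 * f'' (x - x₀) (x - x₀))| ≤ ε * ‖x - x₀‖ ^ 2 := by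
  have hsymm (v w : E) : f'' v w = f'' w v := second_derivative_symmetric_of_eventually hf hf' v w
  obtain ⟨r, hr, hball⟩ := Metric.nhds_basis_ball.mem_iff.1 (hf.and (hf'.isLittleO.def hε))
  set g : E → ℝ := fun y => f y - (f x₀ + f' x₀ (y - x₀) + 1 / 2 * f'' (y - x₀) (y - x₀)) with hg
  have hg' : ∀ y ∈ Metric.ball x₀ r, HasFDerivAt g (f' y - f' x₀ - f'' (y - x₀)) y := by
    intro y hy
    have hsub : HasFDerivAt (fun y => y - x₀) (ContinuousLinearMap.id ℝ E) y :=
      (hasFDerivAt_id y).sub_const x₀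
    refine ((hball hy).1.sub ((((f' x₀).hasFDerivAt.comp y hsub).const_add (f x₀)).add
      ((f''.hasFDerivAt_of_bilinear hsub hsub).const_mul (1 / 2)))).congr_fderiv ?_
    ext1 w
    simp [hsymm w]
    ring
  filter_upwards [Metric.ball_mem_nhds x₀ hr] with x hx
  have hsub : Metric.closedBall x₀ ‖x - x₀‖ ⊆ Metric.ball x₀ r :=
    Metric.closedBall_subset_ball (by simpa [dist_eq_norm] using hx)
  have hmean := (convex_closedBall x₀ ‖x - x₀‖).norm_image_sub_le_of_norm_hasFDerivWithin_le
    (fun y hy => (hg' y (hsub hy)).hasFDerivWithinAt)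
    (fun y hy => (hball (hsub hy)).2.trans
      (mul_le_mul_of_nonneg_left (mem_closedBall_iff_norm.1 hy) hε.le))
    (Metric.mem_closedBall_self (norm_nonneg _)) (mem_closedBall_iff_norm.2 le_rfl)
  simpa [hg, mul_assoc, sq] using hmean

variable {m : ℕ}

theorem zero_le_dotProduct_self (z : Fin m → ℝ) : 0 ≤ z ⬝ᵥ z := by
  simpa using dotProduct_star_self_nonneg z

theorem norm_sq_le_dotProduct_self (z : Fin m → ℝ) : ‖z‖ ^ 2 ≤ z ⬝ᵥ z := by
  rw [← Real.le_sqrt (norm_nonneg z) (zero_le_dotProduct_self z),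
    pi_norm_le_iff_of_nonneg (Real.sqrt_nonneg _)]
  exact fun i => Real.abs_le_sqrt (by
    simpa only [dotProduct, sq] using
      Finset.single_le_sum (f := fun j => z j * z j) (fun j _ => mul_self_nonneg _)
        (Finset.mem_univ i))

theorem eventually_le_quadraticAt {f : (Fin m → ℝ) → ℝ} {x₀ : Fin m → ℝ}
    (hf : ContDiffAt ℝ 2 f x₀) {ε : ℝ} (hε : 0 < ε) :
    ∀ᶠ x in nhds x₀,
      f x ≤ quadraticAt x₀ (f x₀) (fderiv ℝ f x₀) (hessianMatrix f x₀ + ε • 1) x := by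
  have hderiv : ∀ᶠ x in nhds x₀, HasFDerivAt f (fderiv ℝ f x) x :=
    (hf.eventually (by simp)).mono fun x hx => (hx.differentiableAt (by norm_num)).hasFDerivAt
  have hderiv₂ : HasFDerivAt (fderiv ℝ f) (fderiv ℝ (fderiv ℝ f) x₀) x₀ :=
    ((hf.fderiv_right (m := 1) (by norm_num)).differentiableAt one_ne_zero).hasFDerivAt
  filter_upwards [eventually_abs_sub_taylor_two_le hderiv hderiv₂ (half_pos hε)] with x hx
  rw [quadraticAt_add_smul_one, quadraticAt, dotProduct_hessianMatrix_mulVec]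
  linarith [(abs_le.1 hx).2,
    mul_le_mul_of_nonneg_left (norm_sq_le_dotProduct_self (x - x₀)) (half_pos hε).le]

theorem eventually_dotProduct_mulVec_le (A : Matrix (Fin m) (Fin m) ℝ) {ε : ℝ} (hε : 0 < ε) :
    ∀ᶠ B in nhds A, ∀ z, z ⬝ᵥ A *ᵥ z ≤ z ⬝ᵥ (B + ε • 1) *ᵥ z := by
  have hclose : ∀ᶠ B in nhds A, ∀ i j, A i j - B i j ∈ Set.Ioo (-(ε / (m + 1))) (ε / (m + 1)) := by
    refine eventually_all.2 fun i => eventually_all.2 fun j => ?_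
    have hcont : Continuous fun B : Matrix (Fin m) (Fin m) ℝ => A i j - B i j :=
      continuous_const.sub (continuous_apply_apply i j)
    have hδ : 0 < ε / (m + 1) := by positivity
    exact hcont.continuousAt (Ioo_mem_nhds (by simpa using hδ) (by simpa using hδ))
  filter_upwards [hclose] with B hB z
  have hentry (i j : Fin m) :
      z i * ((A i j - B i j) * z j) ≤ ε / (m + 1) * ((z i * z i + z j * z j) / 2) := by
    obtain ⟨hlow, hup⟩ := hB i j
    nlinarith [mul_nonneg (sub_nonneg.2 hup.le) (sq_nonneg (z i + z j)),
      mul_nonneg (sub_nonneg.2 hlow.le) (sq_nonneg (z i - z j))]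
  have hsum : z ⬝ᵥ (A - B) *ᵥ z ≤ ε * (z ⬝ᵥ z) :=
    calc z ⬝ᵥ (A - B) *ᵥ z = ∑ i, ∑ j, z i * ((A i j - B i j) * z j) := by
          simp only [dotProduct, mulVec, Finset.mul_sum, Matrix.sub_apply]
      _ ≤ ∑ i, ∑ j, ε / (m + 1) * ((z i * z i + z j * z j) / 2) :=
          Finset.sum_le_sum fun i _ => Finset.sum_le_sum fun j _ => hentry i j
      _ = m / (m + 1) * ε * (z ⬝ᵥ z) := by
          simp only [← Finset.mul_sum, ← Finset.sum_div, Finset.sum_add_distrib, dotProduct,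
            Finset.sum_const, Finset.card_univ, Fintype.card_fin, nsmul_eq_mul]
          simp only [mul_left_comm _ (m : ℝ), ← Finset.mul_sum]
          ring
      _ ≤ ε * (z ⬝ᵥ z) := by
          refine mul_le_mul_of_nonneg_right (mul_le_of_le_one_left hε.le ?_)
            (zero_le_dotProduct_self z)
          rw [div_le_one (by positivity)]
          linarith
  simp only [sub_mulVec, add_mulVec, smul_mulVec, one_mulVec, dotProduct_sub, dotProduct_add,
    dotProduct_smul, smul_eq_mul] at hsum ⊢
  linarith

end Taylor

section TypeF

variable {m : ℕ} {F : Set (Matrix (Fin m) (Fin m) ℝ)} {U : Set (Fin m → ℝ)}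
  {u : (Fin m → ℝ) → EReal}

theorem add_coe_le_coe_iff {z : EReal} {a b : ℝ} :
    z + (a : EReal) ≤ (b : EReal) ↔ z ≤ ((b - a : ℝ) : EReal) := by
  rw [EReal.coe_sub, EReal.le_sub_iff_add_le (.inl (EReal.coe_ne_bot a))
    (.inl (EReal.coe_ne_top a))]

theorem exists_eq_coe_of_coe_le {z : EReal} {a : ℝ} (h : (a : EReal) ≤ z) (hz : z ≠ ⊤) :
    ∃ b : ℝ, z = b :=
  ⟨z.toReal, (EReal.coe_toReal hz ((EReal.bot_lt_coe a).trans_le h).ne').symm⟩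

theorem IsTypeF.le_of_hessianMatrix_notMem (hu : IsTypeF F U u) {ψ : (Fin m → ℝ) → ℝ}
    (hψ : ContDiff ℝ 2 ψ) (hF : ∀ x ∈ U, hessianMatrix ψ x ∉ F) {K : Set (Fin m → ℝ)}
    (hK : IsCompact K) (hKU : K ⊆ U) (hle : ∀ x ∈ frontier K, u x ≤ ψ x) :
    ∀ x ∈ K, u x ≤ ψ x := by
  have hdual : ∀ x ∈ U, hessianMatrix (fun y => -ψ y) x ∈ dualSub F := fun x hx => by
    have hsymm := isSymm_hessianMatrix (x := x) hψ.contDiffAt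
    rw [hessianMatrix_neg]
    refine ⟨hsymm.neg, fun hint => hF x hx ?_⟩
    rw [neg_neg] at hint
    exact hint.2.self_of_nhds hsymm
  have hcomp := hu.2.2 _ hψ.neg.contDiffOn hdual (AffineMap.const ℝ _ 0) K hK hKU
  simpa only [add_coe_le_coe_iff, AffineMap.const_apply, zero_sub, neg_neg] using
    hcomp (by simpa only [add_coe_le_coe_iff, AffineMap.const_apply, zero_sub, neg_neg] using hle)

/-- `(L, A)` is an upper contact jet of `v` at `x₀`: the value of `v` at `x₀` is finite and the
quadratic function with derivative `L` and Hessian `A` at `x₀` touches `v` from above there. -/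
def IsUpperContactJet (v : (Fin m → ℝ) → EReal) (x₀ : Fin m → ℝ) (L : (Fin m → ℝ) →L[ℝ] ℝ)
    (A : Matrix (Fin m) (Fin m) ℝ) : Prop :=
  ∃ a : ℝ, v x₀ = a ∧ ∀ᶠ x in nhds x₀, v x ≤ quadraticAt x₀ a L A x

variable {v : (Fin m → ℝ) → EReal} {x₀ : Fin m → ℝ}

theorem IsUpperContactJet.mono {L : (Fin m → ℝ) →L[ℝ] ℝ} {A B : Matrix (Fin m) (Fin m) ℝ}
    (h : IsUpperContactJet v x₀ L A) (hAB : ∀ z, z ⬝ᵥ A *ᵥ z ≤ z ⬝ᵥ B *ᵥ z) :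
    IsUpperContactJet v x₀ L B := by
  obtain ⟨a, ha, hle⟩ := h
  refine ⟨a, ha, hle.mono fun x hx => hx.trans (EReal.coe_le_coe_iff.2 ?_)⟩
  simpa [quadraticAt] using hAB (x - x₀)

theorem IsUpperContactJet.of_contDiffAt {f : (Fin m → ℝ) → ℝ} (hf : ContDiffAt ℝ 2 f x₀)
    (heq : v x₀ = f x₀) (hle : ∀ᶠ x in nhds x₀, v x ≤ f x) {ε : ℝ} (hε : 0 < ε) :
    IsUpperContactJet v x₀ (fderiv ℝ f x₀) (hessianMatrix f x₀ + ε • 1) :=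
  ⟨f x₀, heq, by
    filter_upwards [hle, eventually_le_quadraticAt hf hε] with x hx hquad
    exact hx.trans (EReal.coe_le_coe_iff.2 hquad)⟩

-- Adding `ε|y|²` to `v - g`, with `ε` small, moves its maximum by so little that it stays positive,
-- and leaves room to lower the Hessian of the touching function.
theorem exists_interior_contact {K : Set (Fin m → ℝ)} (hK : IsCompact K)
    (hv : ∀ y ∈ K, v y ≠ ⊤) (husc : UpperSemicontinuousOn v K) {g : (Fin m → ℝ) → ℝ}
    (hg : ContinuousOn g K) (hbdry : ∀ y ∈ frontier K, v y ≤ g y) {x : Fin m → ℝ} (hx : x ∈ K)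
    (hlt : (g x : EReal) < v x) :
    ∃ ε > 0, ∃ x₀ ∈ interior K, ∃ c : ℝ, v x₀ = ((g x₀ - ε * (x₀ ⬝ᵥ x₀) + c : ℝ) : EReal) ∧
      ∀ y ∈ K, v y ≤ ((g y - ε * (y ⬝ᵥ y) + c : ℝ) : EReal) := by
  obtain ⟨b, hb⟩ := exists_eq_coe_of_coe_le hlt.le (hv x hx)
  rw [hb, EReal.coe_lt_coe_iff] at hlt
  have hsq : Continuous fun y : Fin m → ℝ => y ⬝ᵥ y := by unfold dotProduct; fun_prop
  obtain ⟨R, hR⟩ := (hK.image hsq).bddAbove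
  have hR : ∀ y ∈ K, y ⬝ᵥ y ≤ R := fun y hy => hR ⟨y, hy, rfl⟩
  have hR₀ : 0 ≤ R := (zero_le_dotProduct_self x).trans (hR x hx)
  obtain ⟨ε, hε, hεR⟩ : ∃ ε > 0, ε * R < b - g x :=
    ⟨(b - g x) / (R + 1), div_pos (sub_pos.2 hlt) (by linarith), by
      rw [div_mul_eq_mul_div, div_lt_iff₀ (by linarith)]
      linarith⟩
  set w : (Fin m → ℝ) → ℝ := fun y => ε * (y ⬝ᵥ y) - g y with hw
  have husc' : UpperSemicontinuousOn (fun y => v y + (w y : EReal)) K :=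
    husc.add' (continuous_coe_real_ereal.comp_continuousOn
      ((continuous_const.mul hsq).continuousOn.sub hg)).upperSemicontinuousOn
      fun y _ => EReal.continuousAt_add (.inr (EReal.coe_ne_bot _)) (.inr (EReal.coe_ne_top _))
  obtain ⟨x₀, hx₀, hmax⟩ := husc'.exists_isMaxOn ⟨x, hx⟩ hK
  have hxx₀ : ((b + w x - w x₀ : ℝ) : EReal) ≤ v x₀ := by
    rw [EReal.coe_sub, EReal.sub_le_iff_le_add (.inl (EReal.coe_ne_bot _))
      (.inl (EReal.coe_ne_top _)), EReal.coe_add, ← hb]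
    exact hmax hx
  obtain ⟨a, ha⟩ := exists_eq_coe_of_coe_le hxx₀ (hv x₀ hx₀)
  rw [ha, EReal.coe_le_coe_iff] at hxx₀
  refine ⟨ε, hε, x₀, by_contra fun hint => ?_, a + w x₀, ?_, fun y hy => ?_⟩
  · have hfr := hbdry x₀ ⟨subset_closure hx₀, hint⟩
    rw [ha, EReal.coe_le_coe_iff] at hfr
    simp only [hw] at hxx₀
    nlinarith [zero_le_dotProduct_self x, hR x₀ hx₀]
  · rw [ha, hw]
    congr 1
    ring
  · have hy : v y + (w y : EReal) ≤ v x₀ + (w x₀ : EReal) := hmax hy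
    rw [ha, ← EReal.coe_add, add_coe_le_coe_iff] at hy
    exact hy.trans_eq (congrArg _ (by simp only [hw]; ring))

theorem exists_isUpperContactJet {K : Set (Fin m → ℝ)} (hK : IsCompact K)
    (hv : ∀ y ∈ K, v y ≠ ⊤) (husc : UpperSemicontinuousOn v K) {w : (Fin m → ℝ) → ℝ}
    (hw : ∀ y ∈ K, ContDiffAt ℝ 2 w y) (a : (Fin m → ℝ) →ᵃ[ℝ] ℝ)
    (hbdry : ∀ y ∈ frontier K, v y ≤ ((a y - w y : ℝ) : EReal)) {x : Fin m → ℝ} (hx : x ∈ K)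
    (hlt : ((a x - w x : ℝ) : EReal) < v x) :
    ∃ x₀ ∈ K, ∃ L, ∃ ε > (0 : ℝ), IsUpperContactJet v x₀ L (-hessianMatrix w x₀ - ε • 1) := by
  have hcont : ContinuousOn (fun y => a y - w y) K :=
    a.continuous_of_finiteDimensional.continuousOn.sub
      fun y hy => (hw y hy).continuousAt.continuousWithinAt
  obtain ⟨ε, hε, x₀, hx₀, c, hvx₀, hle⟩ := exists_interior_contact hK hv husc hcont hbdry hx hlt
  have hwx₀ := hw x₀ (interior_subset hx₀)
  set q := quadraticAt 0 (a 0 + c) a.linear.toContinuousLinearMap ((-(2 * ε)) • 1)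
  have hq (y) : a y - w y - ε * (y ⬝ᵥ y) + c = q y - w y := by
    have hdecomp := congrFun a.decomp y
    simp only [Pi.add_apply] at hdecomp
    simp only [q, quadraticAt, sub_zero, smul_mulVec, one_mulVec, dotProduct_smul, smul_eq_mul,
      hdecomp, LinearMap.coe_toContinuousLinearMap']
    ring
  simp only [hq] at hvx₀ hle
  have hcontact := IsUpperContactJet.of_contDiffAt (contDiff_quadraticAt.contDiffAt.sub hwx₀) hvx₀
    (mem_of_superset (mem_interior_iff_mem_nhds.1 hx₀) hle) hε
  refine ⟨x₀, interior_subset hx₀, _, ε, hε, hcontact.mono fun z => le_of_eq ?_⟩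
  rw [hessianMatrix_sub contDiff_quadraticAt.contDiffAt hwx₀,
    hessianMatrix_quadraticAt (isSymm_one.smul _)]
  congr 2
  module

theorem IsTypeF.of_isUpperContactJet (hU : IsOpen U) (hv : ∀ x ∈ U, v x ≠ ⊤)
    (husc : UpperSemicontinuousOn v U)
    (hjet : ∀ x₀ ∈ U, ∀ L B, ∀ ε > (0 : ℝ), B.IsSymm →
      IsUpperContactJet v x₀ L (B - ε • 1) → B ∈ F) :
    IsTypeF F U v := by
  refine ⟨hv, husc, fun w hw hdual a K hK hKU hbdry x hx => ?_⟩
  simp only [add_coe_le_coe_iff] at hbdry ⊢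
  by_contra! hlt
  have hwK : ∀ y ∈ U, ContDiffAt ℝ 2 w y := fun y hy => hw.contDiffAt (hU.mem_nhds hy)
  obtain ⟨x₀, hx₀, L, ε, hε, hcontact⟩ := exists_isUpperContactJet hK (fun y hy => hv y (hKU hy))
    (husc.mono hKU) (fun y hy => hwK y (hKU hy)) a hbdry hx hlt
  have hnotint : ∃ᶠ B in nhds (-hessianMatrix w x₀), B.IsSymm ∧ B ∉ F := by
    have hdual₀ := (hdual x₀ (hKU hx₀)).2
    simp only [symInterior, Set.mem_ofPred_eq, (isSymm_hessianMatrix (hwK x₀ (hKU hx₀))).neg,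
      true_and, not_eventually, Classical.not_imp] at hdual₀
    exact hdual₀
  obtain ⟨B, ⟨hB, hBF⟩, hnear⟩ := (hnotint.and_eventually
    (eventually_dotProduct_mulVec_le (-hessianMatrix w x₀) (half_pos hε))).exists
  refine hBF (hjet x₀ (hKU hx₀) L B (ε / 2) (half_pos hε) hB (hcontact.mono fun z => ?_))
  have hz := hnear z
  simp only [sub_mulVec, add_mulVec, smul_mulVec, one_mulVec, dotProduct_sub,
    dotProduct_add, dotProduct_smul, smul_eq_mul] at hz ⊢
  linarith

end TypeF

section ArgSum

/-- The sum of the principal arguments of a multiset of complex numbers; on the spectrum of a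
matrix it lifts the phase of the determinant to `ℝ`. -/
noncomputable def argSum (R : Multiset ℂ) : ℝ := (R.map Complex.arg).sum

theorem coe_argSum {R : Multiset ℂ} (hR : 0 ∉ R) :
    (argSum R : Real.Angle) = Complex.arg R.prod := by
  induction R using Multiset.induction_on with
  | empty => simp [argSum]
  | cons a R ih =>
    simp only [Multiset.mem_cons, not_or] at hR
    rw [Multiset.prod_cons, Complex.arg_mul_coe_angle (Ne.symm hR.1) (Multiset.prod_ne_zero hR.2),
      ← ih hR.2]
    simp [argSum]

theorem continuousOn_argSum_add {R : Multiset ℂ} {s : Set ℝ}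
    (hR : ∀ z ∈ R, ∀ t ∈ s, z + t ∈ Complex.slitPlane) :
    ContinuousOn (fun t : ℝ => argSum (R.map (· + (t : ℂ)))) s := by
  simp only [argSum, Multiset.map_map]
  exact continuousOn_multiset_sum R fun z hz =>
    ContinuousOn.comp (fun w hw => (Complex.continuousAt_arg hw).continuousWithinAt)
      (by fun_prop) fun t ht => hR z hz t ht

theorem tendsto_arg_of_tendsto_div {g : ℝ → ℂ} (hg : Tendsto (fun t => g t / t) atTop (nhds 1)) :
    Tendsto (fun t => Complex.arg (g t)) atTop (nhds 0) := by
  have harg := (Complex.continuousAt_arg Complex.one_mem_slitPlane).tendsto.comp hg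
  rw [Complex.arg_one] at harg
  refine harg.congr' ?_
  filter_upwards [eventually_gt_atTop 0] with t ht
  rw [Function.comp_apply, ← Complex.arg_mul_real ht (g t / t),
    div_mul_cancel₀ _ (Complex.ofReal_ne_zero.2 ht.ne')]

theorem tendsto_add_ofReal_div (z : ℂ) :
    Tendsto (fun t : ℝ => (z + t) / (t : ℂ)) atTop (nhds 1) := by
  have hinv : Tendsto (fun t : ℝ => ((t⁻¹ : ℝ) : ℂ)) atTop (nhds 0) := by
    simpa only [Complex.ofReal_zero, Function.comp_def] using
      (Complex.continuous_ofReal.tendsto 0).comp tendsto_inv_atTop_zero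
  have hlim : Tendsto (fun t : ℝ => z * ((t⁻¹ : ℝ) : ℂ) + 1) atTop (nhds 1) := by
    simpa using (hinv.const_mul z).add_const 1
  refine hlim.congr' ?_
  filter_upwards [eventually_gt_atTop 0] with t ht
  rw [add_div, div_self (Complex.ofReal_ne_zero.2 ht.ne'), Complex.ofReal_inv, div_eq_mul_inv]

theorem tendsto_argSum_add (R : Multiset ℂ) :
    Tendsto (fun t : ℝ => argSum (R.map (· + (t : ℂ)))) atTop (nhds 0) := by
  simp only [argSum, Multiset.map_map]
  simpa using tendsto_multiset_sum R fun z _ =>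
    tendsto_arg_of_tendsto_div (tendsto_add_ofReal_div z)

theorem tendsto_prod_add_div_pow (R : Multiset ℂ) :
    Tendsto (fun t : ℝ => (R.map (· + (t : ℂ))).prod / (t : ℂ) ^ R.card) atTop (nhds 1) := by
  simpa [Multiset.prod_map_div] using tendsto_multiset_prod R fun z _ => tendsto_add_ofReal_div z

theorem tendsto_arg_prod_add_div_prod_add {R L : Multiset ℂ} (hcard : R.card = L.card + 1) :
    Tendsto (fun t : ℝ => Complex.arg ((R.map (· + (t : ℂ))).prod / (L.map (· + (t : ℂ))).prod))
      atTop (nhds 0) := by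
  refine tendsto_arg_of_tendsto_div ?_
  have hquot := (tendsto_prod_add_div_pow R).div (tendsto_prod_add_div_pow L) one_ne_zero
  rw [div_one] at hquot
  refine hquot.congr' ?_
  filter_upwards [eventually_gt_atTop 0] with t ht
  have ht' : (t : ℂ) ≠ 0 := Complex.ofReal_ne_zero.2 ht.ne'
  simp only [Pi.div_apply, hcard]
  field_simp
  ring

theorem eq_zero_of_forall_coe_angle_eq_zero {h : ℝ → ℝ} (hcont : ContinuousOn h (Set.Ici 0))
    (hangle : ∀ t, 0 ≤ t → (h t : Real.Angle) = 0) (hlim : Tendsto h atTop (nhds 0)) :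
    h 0 = 0 := by
  have hmaps : Set.MapsTo h (Set.Ici 0) (AddSubgroup.zmultiples (2 * π) : Set ℝ) := fun t ht =>
    (QuotientAddGroup.eq_zero_iff (h t)).1 (hangle t ht)
  have hdiscrete : IsDiscrete (AddSubgroup.zmultiples (2 * π) : Set ℝ) :=
    isDiscrete_iff_discreteTopology.2
      (inferInstanceAs (DiscreteTopology (AddSubgroup.zmultiples (2 * π))))
  refine tendsto_nhds_unique (tendsto_const_nhds.congr' ?_) hlim
  filter_upwards [eventually_ge_atTop 0] with t ht
  exact isPreconnected_Ici.constant_of_mapsTo hdiscrete hcont hmaps Set.self_mem_Ici ht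

theorem add_ofReal_mem_slitPlane {z : ℂ} (hz : ∀ t : ℝ, 0 ≤ t → z + t ≠ 0) {t : ℝ} (ht : 0 ≤ t) :
    z + t ∈ Complex.slitPlane := by
  by_contra hslit
  obtain ⟨hre, him⟩ := Complex.le_def.1 (Complex.mem_slitPlane_iff_not_le_zero.not_left.1 hslit)
  refine hz (t - (z + t).re) (by simpa using ht.trans' hre) (Complex.ext ?_ ?_)
  · simp
  · simpa using him

-- Along the shift by `t ≥ 0` both sides agree modulo `2π`, vary continuously, and tend to `0`.
theorem argSum_eq_add_arg_div {R L : Multiset ℂ} (hcard : R.card = L.card + 1)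
    (hL : ∀ z ∈ L, 0 < z.re)
    (hdiv : ∀ t : ℝ, 0 ≤ t →
      (R.map (· + (t : ℂ))).prod / (L.map (· + (t : ℂ))).prod ∈ Complex.slitPlane) :
    argSum R = argSum L + Complex.arg (R.prod / L.prod) := by
  set g : ℝ → ℂ := fun t => (R.map (· + (t : ℂ))).prod / (L.map (· + (t : ℂ))).prod
  have hne (t : ℝ) (ht : 0 ≤ t) :
      (R.map (· + (t : ℂ))).prod ≠ 0 ∧ (L.map (· + (t : ℂ))).prod ≠ 0 :=
    div_ne_zero_iff.1 (Complex.slitPlane_ne_zero (hdiv t ht))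
  have hRslit : ∀ z ∈ R, ∀ t ∈ Set.Ici (0 : ℝ), z + t ∈ Complex.slitPlane := fun z hz t ht =>
    add_ofReal_mem_slitPlane (fun s hs h0 => (hne s hs).1
      (Multiset.prod_eq_zero (Multiset.mem_map.2 ⟨z, hz, h0⟩))) ht
  have hLslit : ∀ z ∈ L, ∀ t ∈ Set.Ici (0 : ℝ), z + t ∈ Complex.slitPlane := fun z hz t ht =>
    Complex.mem_slitPlane_iff.2 (.inl (by simpa using add_pos_of_pos_of_nonneg (hL z hz) ht))
  have hgcont : ContinuousOn (fun t => Complex.arg (g t)) (Set.Ici 0) := by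
    have hshift (Q : Multiset ℂ) : Continuous fun t : ℝ => (Q.map (· + (t : ℂ))).prod :=
      continuous_multiset_prod Q fun z _ => by fun_prop
    exact ContinuousOn.comp (fun w hw => (Complex.continuousAt_arg hw).continuousWithinAt)
      ((hshift R).continuousOn.div (hshift L).continuousOn fun t ht => (hne t ht).2) hdiv
  have hangle (t : ℝ) (ht : 0 ≤ t) : ((argSum (R.map (· + (t : ℂ))) -
      (argSum (L.map (· + (t : ℂ))) + Complex.arg (g t)) : ℝ) : Real.Angle) = 0 := by
    obtain ⟨hRt, hLt⟩ := hne t ht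
    rw [Real.Angle.coe_sub, Real.Angle.coe_add, sub_eq_zero,
      coe_argSum fun h0 => hRt (Multiset.prod_eq_zero h0),
      coe_argSum fun h0 => hLt (Multiset.prod_eq_zero h0),
      ← Complex.arg_mul_coe_angle hLt (Complex.slitPlane_ne_zero (hdiv t ht)),
      mul_div_cancel₀ _ hLt]
  have hzero := eq_zero_of_forall_coe_angle_eq_zero (h := fun t => argSum (R.map (· + (t : ℂ))) -
      (argSum (L.map (· + (t : ℂ))) + Complex.arg (g t)))
    ((continuousOn_argSum_add hRslit).sub ((continuousOn_argSum_add hLslit).add hgcont)) hangle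
    (by simpa only [add_zero, sub_zero] using (tendsto_argSum_add R).sub <|
      (tendsto_argSum_add L).add (tendsto_arg_prod_add_div_prod_add hcard))
  simpa [sub_eq_zero, g] using hzero

end ArgSum

section SpaceTimeAngle

theorem card_roots_charpoly {m : ℕ} (M : Matrix (Fin m) (Fin m) ℂ) : M.charpoly.roots.card = m := by
  rw [Polynomial.splits_iff_card_roots.1 (IsAlgClosed.splits M.charpoly),
    M.charpoly_natDegree_eq_dim, Fintype.card_fin]

theorem prod_roots_charpoly_add {m : ℕ} (M : Matrix (Fin m) (Fin m) ℂ) (s : ℂ) :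
    (M.charpoly.roots.map (· + s)).prod = (M + s • 1).det := by
  have hroots : M.charpoly.eval (-s) = (M.charpoly.roots.map fun z => -(z + s)).prod := by
    conv_lhs => rw [(IsAlgClosed.splits M.charpoly).eq_prod_roots_of_monic M.charpoly_monic]
    rw [Polynomial.eval_multiset_prod, Multiset.map_map]
    exact congrArg _ (Multiset.map_congr rfl fun z _ => by simp; ring)
  have hscalar : scalar (Fin m) (-s) - M = -(M + s • 1) := by
    rw [scalar_apply, ← smul_one_eq_diagonal, neg_smul]
    abel
  have hneg := Multiset.prod_map_neg (M.charpoly.roots.map (· + s))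
  rw [Multiset.map_map, Multiset.card_map, card_roots_charpoly] at hneg
  rw [eval_charpoly, hscalar, det_neg, Fintype.card_fin] at hroots
  exact mul_left_cancel₀ (pow_ne_zero m (neg_ne_zero.2 one_ne_zero)) (hneg.symm.trans hroots.symm)

theorem det_smul_one_add_I_smul {n : ℕ} {S : Matrix (Fin n) (Fin n) ℝ} (hS : S.IsHermitian)
    (z : ℂ) : (z • 1 + Complex.I • S.map (fun a => (a : ℂ))).det =
      ∏ j, (z + Complex.I * hS.eigenvalues j) := by
  have hrot : z • 1 + Complex.I • S.map (fun a => (a : ℂ)) =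
      -Complex.I • (scalar (Fin n) (Complex.I * z) - S.map (fun a => (a : ℂ))) := by
    rw [scalar_apply, ← smul_one_eq_diagonal, smul_sub, smul_smul, neg_smul, sub_neg_eq_add,
      ← mul_assoc, neg_mul, Complex.I_mul_I, neg_neg, one_mul]
  have hpoly : (S.map (fun a => (a : ℂ))).charpoly = S.charpoly.map Complex.ofRealHom :=
    S.charpoly_map Complex.ofRealHom
  rw [hrot, det_smul, ← eval_charpoly, hpoly, hS.charpoly_eq, Polynomial.map_prod,
    Polynomial.eval_prod, Fintype.card_fin, ← Fin.prod_const, ← Finset.prod_mul_distrib]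
  refine Finset.prod_congr rfl fun j _ => ?_
  simp only [RCLike.ofReal_real_eq_id, id_eq, Polynomial.map_sub, Polynomial.map_X,
    Polynomial.map_C, Polynomial.eval_sub, Polynomial.eval_X, Polynomial.eval_C,
    Complex.ofRealHom_eq_coe]
  linear_combination -z * Complex.I_mul_I

theorem det_eq_det_mul_of_complete_square {R : Type*} [CommRing R] {n : ℕ}
    {M : Matrix (Fin (n + 1)) (Fin (n + 1)) R} {T : Matrix (Fin n) (Fin n) R} (hT : IsUnit T.det)
    {p : Fin n → R} {α s : R} (hM : M 0 0 = s + α) (hrow : ∀ j, M 0 j.succ = -(α * p j))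
    (hcol : ∀ i, M i.succ 0 = -(α * p i))
    (hblock : ∀ i j, M i.succ j.succ = T i j + α * p i * p j) :
    M.det = T.det * (s + α + α * s * (p ⬝ᵥ T⁻¹ *ᵥ p)) := by
  let e : Fin n ⊕ Unit ≃ Fin (n + 1) :=
    ((finSuccEquiv n).trans (Equiv.optionEquivSumPUnit (Fin n))).symm
  let _ : Invertible T := invertibleOfIsUnitDet T hT
  have hblocks : fromBlocks 1 (replicateCol Unit p) 0 1 * M.submatrix e e =
      fromBlocks T (s • replicateCol Unit p) (-α • replicateRow Unit p) (of fun _ _ => s + α) := by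
    have hM' : M.submatrix e e = fromBlocks (T + α • vecMulVec p p) (-α • replicateCol Unit p)
        (-α • replicateRow Unit p) (of fun _ _ => s + α) := by
      ext (i | i) (j | j)
      · simp [e, hblock, vecMulVec_apply, mul_assoc]
      · simp [e, hcol]
      · simp [e, hrow]
      · simp [e, hM]
    rw [hM', fromBlocks_multiply]
    congr 1
    · ext i j
      simp [mul_apply, vecMulVec_apply]
    · ext i j
      simp [mul_apply]
      ring
    · simp
    · simp
  calc M.det = (fromBlocks 1 (replicateCol Unit p) 0 1 * M.submatrix e e).det := by
        rw [det_mul, det_fromBlocks_zero₂₁, det_one, det_one, one_mul, one_mul,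
          det_submatrix_equiv_self]
    _ = T.det * (s + α + α * s * (p ⬝ᵥ T⁻¹ *ᵥ p)) := by
        rw [hblocks, det_fromBlocks₁₁, det_unique (n := Unit), invOf_eq_nonsing_inv]
        congr 1
        have hentry : (replicateRow Unit p * T⁻¹ * replicateCol Unit p) default default =
            p ⬝ᵥ T⁻¹ *ᵥ p := by
          rw [Matrix.mul_assoc, ← replicateCol_mulVec, mul_apply]
          rfl
        simp [hentry]
        ring

theorem re_dotProduct_inv_mulVec_nonneg {n : ℕ} {S : Matrix (Fin n) (Fin n) ℝ}
    (hS : S.IsHermitian) {a : ℝ} (ha : 0 ≤ a) (p : Fin n → ℝ)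
    (hdet : IsUnit (((a : ℂ) • 1 + Complex.I • S.map (fun x => (x : ℂ)) :
      Matrix (Fin n) (Fin n) ℂ)).det) :
    0 ≤ ((fun j => (p j : ℂ)) ⬝ᵥ
      ((a : ℂ) • 1 + Complex.I • S.map (fun x => (x : ℂ)))⁻¹ *ᵥ fun j => (p j : ℂ)).re := by
  set T : Matrix (Fin n) (Fin n) ℂ := (a : ℂ) • 1 + Complex.I • S.map (fun x => (x : ℂ)) with hT
  set q : Fin n → ℂ := fun j => p j
  set w := T⁻¹ *ᵥ q
  have hq : q = T *ᵥ w := by rw [mulVec_mulVec, mul_nonsing_inv _ hdet, one_mulVec]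
  have hqstar : star q = q := funext fun j => Complex.conj_ofReal (p j)
  have hSC : (S.map fun x => (x : ℂ)).IsHermitian := by
    exact hS.map _ fun x => (Complex.conj_ofReal x).symm
  have hSw : (star w ⬝ᵥ S.map (fun x => (x : ℂ)) *ᵥ w).im = 0 :=
    hSC.im_star_dotProduct_mulVec_self w
  have hww : 0 ≤ (star w ⬝ᵥ w).re := by
    rw [dotProduct, Complex.re_sum]
    exact Finset.sum_nonneg fun j _ => by
      simpa using add_nonneg (mul_self_nonneg (w j).re) (mul_self_nonneg (w j).im)
  have hexp : star (q ⬝ᵥ w) = a * (star w ⬝ᵥ w) +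
      Complex.I * (star w ⬝ᵥ S.map (fun x => (x : ℂ)) *ᵥ w) := by
    rw [← star_dotProduct_star, hqstar]
    conv_lhs => rw [hq, hT, add_mulVec, smul_mulVec, smul_mulVec, one_mulVec]
    simp
  have hre := congrArg Complex.re hexp
  simp only [Complex.add_re, Complex.re_ofReal_mul, Complex.I_mul_re, hSw, neg_zero, add_zero,
    Complex.star_def, Complex.conj_re] at hre
  exact hre ▸ mul_nonneg ha hww

theorem arg_one_add_I_mul (l : ℝ) : Complex.arg (1 + Complex.I * l) = Real.arctan l := by
  have hre : |Complex.arg (1 + Complex.I * l)| < π / 2 :=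
    Complex.abs_arg_lt_pi_div_two_iff.2 (.inl (by simp))
  rw [← Real.arctan_tan (abs_lt.1 hre).1 (abs_lt.1 hre).2, Complex.tan_arg]
  simp

theorem ofReal_add_I_mul_ne_zero {s : ℝ} (hs : s ≠ 0) (l : ℝ) : (s : ℂ) + Complex.I * l ≠ 0 :=
  fun h0 => hs (by simpa using congrArg Complex.re h0)

theorem liftedAngle_eq_sum {m : ℕ} {S : Matrix (Fin m) (Fin m) ℝ} (hS : S.IsHermitian) :
    liftedAngle S = ∑ j, Real.arctan (hS.eigenvalues j) :=
  dif_pos hS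

/-- The Schur complement of the corner entry `A 0 0` in `A`: completing the square in the zeroth
variable turns the quadratic form of `A` into `A 0 0 * (t + …)² + schurCompl A`.
Meaningful only when `A 0 0 ≠ 0`. -/
noncomputable def schurCompl {n : ℕ} (A : Matrix (Fin (n + 1)) (Fin (n + 1)) ℝ) :
    Matrix (Fin n) (Fin n) ℝ :=
  of fun i j => A i.succ j.succ - A i.succ 0 * A 0 j.succ / A 0 0

variable {n : ℕ} {A : Matrix (Fin (n + 1)) (Fin (n + 1)) ℝ}

theorem isSymm_schurCompl (hA : A.IsSymm) : (schurCompl A).IsSymm := by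
  ext i j
  simp only [schurCompl, transpose_apply, of_apply, hA.apply]
  ring

theorem exists_det_cmat_add_smul_one (hA : A.IsSymm) (hpos : 0 < A 0 0)
    (hS : (schurCompl A).IsHermitian) {t : ℝ} (ht : 0 ≤ t) :
    ∃ w : ℂ, 0 ≤ w.re ∧ (cmat A + (t : ℂ) • 1).det =
      (∏ j, ((1 + t : ℝ) + Complex.I * hS.eigenvalues j)) *
        (t + Complex.I * A 0 0 * (1 + t * w)) := by
  set T : Matrix (Fin n) (Fin n) ℂ :=
    ((1 + t : ℝ) : ℂ) • 1 + Complex.I • (schurCompl A).map (fun x => (x : ℂ)) with hT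
  have hdetT : T.det = ∏ j, ((1 + t : ℝ) + Complex.I * hS.eigenvalues j) :=
    det_smul_one_add_I_smul hS _
  have hunit : IsUnit T.det := by
    rw [hdetT, isUnit_iff_ne_zero, Finset.prod_ne_zero_iff]
    exact fun j _ => ofReal_add_I_mul_ne_zero (by positivity) _
  have hne : (A 0 0 : ℂ) ≠ 0 := Complex.ofReal_ne_zero.2 hpos.ne'
  let p : Fin n → ℝ := fun j => -(A 0 j.succ / A 0 0)
  refine ⟨_, re_dotProduct_inv_mulVec_nonneg hS (by linarith) p hunit, ?_⟩
  rw [← hdetT, det_eq_det_mul_of_complete_square (α := Complex.I * A 0 0) (s := t)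
    (p := fun j => (p j : ℂ)) hunit]
  · ring
  · simp [cmat, Inmat, add_comm]
  · intro j
    simp [cmat, Inmat, p, one_apply, (Fin.succ_ne_zero j).symm]
    field_simp
  · intro i
    simp [cmat, Inmat, p, hA.apply 0 i.succ]
    field_simp
  · intro i j
    rcases eq_or_ne i j with rfl | hij
    · simp [cmat, Inmat, p, hT, schurCompl, hA.apply 0 i.succ]
      field_simp
      ring
    · simp [cmat, Inmat, p, hT, schurCompl, hA.apply 0 i.succ, hij]
      field_simp
      ring

theorem spaceTimeAngle_eq_argSum (hdet : (cmat A).det ≠ 0) :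
    spaceTimeAngle A = argSum (cmat A).charpoly.roots :=
  if_neg hdet

theorem spaceTimeAngle_eq_pi_div_two_add (hA : A.IsSymm) (hpos : 0 < A 0 0) :
    spaceTimeAngle A = π / 2 + liftedAngle (schurCompl A) := by
  have hS := isHermitian_iff_isSymm.2 (isSymm_schurCompl hA)
  set L : Multiset ℂ := Finset.univ.val.map fun j => 1 + Complex.I * hS.eigenvalues j with hL
  have hprod (t : ℝ) : (L.map (· + (t : ℂ))).prod =
      ∏ j, ((1 + t : ℝ) + Complex.I * hS.eigenvalues j) := by
    rw [hL, Multiset.map_map]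
    exact Finset.prod_congr rfl fun j _ => by simp; ring
  have hquot (t : ℝ) (ht : 0 ≤ t) : ∃ w : ℂ, 0 ≤ w.re ∧
      ((cmat A).charpoly.roots.map (· + (t : ℂ))).prod / (L.map (· + (t : ℂ))).prod =
        t + Complex.I * A 0 0 * (1 + t * w) := by
    obtain ⟨w, hw, hdet⟩ := exists_det_cmat_add_smul_one hA hpos hS ht
    refine ⟨w, hw, ?_⟩
    rw [prod_roots_charpoly_add, hdet, hprod, mul_div_cancel_left₀]
    exact Finset.prod_ne_zero_iff.2 fun j _ => ofReal_add_I_mul_ne_zero (by positivity) _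
  have hzero : (cmat A).charpoly.roots.prod / L.prod = Complex.I * A 0 0 := by
    obtain ⟨w, -, hw⟩ := hquot 0 le_rfl
    simpa using hw
  have hdet : (cmat A).det ≠ 0 := by
    rw [det_eq_prod_roots_charpoly]
    refine (div_ne_zero_iff.1 (hzero.trans_ne ?_)).1
    exact mul_ne_zero Complex.I_ne_zero (Complex.ofReal_ne_zero.2 hpos.ne')
  have hLsum : argSum L = liftedAngle (schurCompl A) := by
    rw [liftedAngle_eq_sum hS, argSum, hL, Multiset.map_map]
    exact Finset.sum_congr rfl fun j _ => arg_one_add_I_mul _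
  rw [spaceTimeAngle_eq_argSum hdet, argSum_eq_add_arg_div (L := L), hzero, hLsum,
    Complex.arg_mul_real hpos, Complex.arg_I, add_comm]
  · simp [hL, card_roots_charpoly]
  · simp [hL]
  · intro t ht
    obtain ⟨w, hw, heq⟩ := hquot t ht
    rw [heq, Complex.mem_slitPlane_iff]
    right
    have him : 0 < A 0 0 * (1 + t * w.re) := by positivity
    simpa [mul_assoc] using him.ne'

theorem spaceTimeAngle_diagonal_lt {d : Fin (n + 1) → ℝ} (hd : d 0 < 0) :
    spaceTimeAngle (diagonal d) < n * π / 2 := by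
  set z : Fin (n + 1) → ℂ := fun i => (if i = 0 then 0 else 1) + Complex.I * d i
  have hz0 : z 0 = Complex.I * d 0 := by simp [z]
  have hcmat : cmat (diagonal d) = diagonal z := by
    rw [cmat, Inmat, diagonal_map Complex.ofReal_zero, ← diagonal_smul, diagonal_add]
    rfl
  have hroots : (cmat (diagonal d)).charpoly.roots = Finset.univ.val.map z := by
    rw [hcmat, charpoly_diagonal, ← Polynomial.roots_multiset_prod_X_sub_C (Finset.univ.val.map z),
      Multiset.map_map]
    rfl
  have hdet : (cmat (diagonal d)).det ≠ 0 := by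
    rw [hcmat, det_diagonal, Finset.prod_ne_zero_iff]
    refine fun i _ => Fin.cases ?_ (fun j h0 => ?_) i
    · simp [hz0, hd.ne]
    · simpa [z] using congrArg Complex.re h0
  have harg0 : Complex.arg (z 0) = -(π / 2) := by
    rw [Complex.arg_eq_neg_pi_div_two_iff]
    simp [hz0, hd]
  have harg (j : Fin n) : Complex.arg (z j.succ) ≤ π / 2 :=
    Complex.arg_le_pi_div_two_iff.2 (.inl (by simp [z]))
  have hsum := Finset.sum_le_card_nsmul Finset.univ _ _ fun j _ => harg j
  have hangle : spaceTimeAngle (diagonal d) = -(π / 2) + ∑ j : Fin n, Complex.arg (z j.succ) := by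
    rw [spaceTimeAngle_eq_argSum hdet, argSum, hroots, Multiset.map_map, ← harg0]
    exact Fin.sum_univ_succ fun i => Complex.arg (z i)
  rw [Finset.card_univ, Fintype.card_fin, nsmul_eq_mul] at hsum
  rw [hangle]
  linarith [Real.pi_pos]

end SpaceTimeAngle

section Supergradient

theorem concaveOn_arctan : ConcaveOn ℝ (Set.Ici 0) Real.arctan := by
  refine AntitoneOn.concaveOn_of_deriv (convex_Ici 0) Real.continuous_arctan.continuousOn
    Real.differentiable_arctan.differentiableOn ?_
  rw [interior_Ici, Real.deriv_arctan]
  intro x hx y _ hxy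
  have hx : 0 < x := hx
  dsimp only
  gcongr

theorem arctan_sub_arctan_le {m x : ℝ} (hm : 0 ≤ m) (hx : 0 ≤ x) :
    Real.arctan x - Real.arctan m ≤ 1 / (1 + m ^ 2) * (x - m) := by
  have hderiv := Real.hasDerivAt_arctan m
  rcases lt_trichotomy x m with h | rfl | h
  · have hslope := concaveOn_arctan.le_slope_of_hasDerivAt hx hm h hderiv
    rw [slope_def_field, le_div_iff₀ (sub_pos.2 h)] at hslope
    linarith
  · simp
  · have hslope := concaveOn_arctan.slope_le_of_hasDerivAt hm hx h hderiv
    rwa [slope_def_field, div_le_iff₀ (sub_pos.2 h)] at hslope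

-- For `m < 0` the line of slope `1` through the origin lies above `arctan` on `[0, ∞)` and
-- below it at `m`.
theorem exists_pos_arctan_sub_arctan_le (m : ℝ) :
    ∃ b > 0, ∀ x ≥ 0, Real.arctan x - Real.arctan m ≤ b * (x - m) := by
  rcases le_or_gt 0 m with hm | hm
  · exact ⟨1 / (1 + m ^ 2), by positivity, fun x hx => arctan_sub_arctan_le hm hx⟩
  · refine ⟨1, one_pos, fun x hx => ?_⟩
    have hx0 := arctan_sub_arctan_le le_rfl hx
    have hm0 := arctan_sub_arctan_le le_rfl (neg_nonneg.2 hm.le)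
    rw [Real.arctan_neg] at hm0
    norm_num at hx0 hm0
    linarith

variable {n : ℕ} {B S : Matrix (Fin n) (Fin n) ℝ}

theorem exists_doublyStochastic_diag_conj (hS : S.IsHermitian)
    (U : unitaryGroup (Fin n) ℝ) :
    ∃ P ∈ doublyStochastic ℝ (Fin n), ∀ j,
      (star (U : Matrix (Fin n) (Fin n) ℝ) * S * U) j j = ∑ k, P j k * hS.eigenvalues k := by
  let Z : unitaryGroup (Fin n) ℝ := star U * hS.eigenvectorUnitary
  have hrow (j : Fin n) : ∑ k, Z j k ^ 2 = 1 := by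
    simpa [mul_apply, star_apply, sq] using congr($(mem_unitaryGroup_iff.1 Z.2) j j)
  have hcol (k : Fin n) : ∑ j, Z j k ^ 2 = 1 := by
    simpa [mul_apply, star_apply, sq] using congr($(mem_unitaryGroup_iff'.1 Z.2) k k)
  refine ⟨of fun j k => Z j k ^ 2,
    mem_doublyStochastic_iff_sum.2 ⟨fun j k => sq_nonneg _, by simpa only [of_apply] using hrow,
      by simpa only [of_apply] using hcol⟩, fun j => ?_⟩
  have hconj : star (U : Matrix (Fin n) (Fin n) ℝ) * S * U =
      Z * diagonal hS.eigenvalues * star (Z : Matrix (Fin n) (Fin n) ℝ) := by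
    conv_lhs => rw [hS.spectral_theorem, Unitary.conjStarAlgAut_apply]
    simp [Z, mul_assoc]
  rw [hconj, mul_apply]
  refine Finset.sum_congr rfl fun k _ => ?_
  rw [mul_diagonal, star_apply, star_trivial, of_apply]
  ring

theorem exists_posDef_liftedAngle_sub_le (hB : B.IsHermitian) :
    ∃ M : Matrix (Fin n) (Fin n) ℝ, M.PosDef ∧ ∀ S : Matrix (Fin n) (Fin n) ℝ, S.PosSemidef →
      liftedAngle S - liftedAngle B ≤ (M * (S - B)).trace := by
  choose b hbpos hb using fun j => exists_pos_arctan_sub_arctan_le (hB.eigenvalues j)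
  set U := hB.eigenvectorUnitary
  refine ⟨U * diagonal b * star (U : Matrix (Fin n) (Fin n) ℝ), ?_, fun S hS => ?_⟩
  · exact (IsUnit.posDef_star_right_conjugate_iff Unitary.isUnit_coe).2 (.diagonal hbpos)
  obtain ⟨P, hP, hdiag⟩ := exists_doublyStochastic_diag_conj hS.isHermitian U
  have hBdiag : star (U : Matrix (Fin n) (Fin n) ℝ) * B * U = diagonal hB.eigenvalues := by
    simpa [Unitary.conjStarAlgAut_apply, Function.comp_def] using
      hB.conjStarAlgAut_star_eigenvectorUnitary
  have htrace (X : Matrix (Fin n) (Fin n) ℝ) :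
      (U * diagonal b * star (U : Matrix (Fin n) (Fin n) ℝ) * X).trace =
        ∑ j, b j * (star (U : Matrix (Fin n) (Fin n) ℝ) * X * U) j j := by
    rw [mul_assoc, mul_assoc, trace_mul_comm, mul_assoc, trace]
    exact Finset.sum_congr rfl fun j _ => by rw [diag_apply, diagonal_mul]
  calc liftedAngle S - liftedAngle B
      = ∑ j, ∑ k, P j k * (Real.arctan (hS.isHermitian.eigenvalues k) -
          Real.arctan (hB.eigenvalues j)) := by
        simp only [mul_sub, Finset.sum_sub_distrib]
        rw [Finset.sum_comm]
        simp only [← Finset.sum_mul, sum_row_of_mem_doublyStochastic hP,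
          sum_col_of_mem_doublyStochastic hP, one_mul, liftedAngle_eq_sum hS.isHermitian,
          liftedAngle_eq_sum hB]
    _ ≤ ∑ j, ∑ k, P j k * (b j * (hS.isHermitian.eigenvalues k - hB.eigenvalues j)) := by
        gcongr with j _ k _
        · exact nonneg_of_mem_doublyStochastic hP
        · exact hb j _ (hS.eigenvalues_nonneg k)
    _ = ∑ j, b j * ((∑ k, P j k * hS.isHermitian.eigenvalues k) - hB.eigenvalues j) := by
        refine Finset.sum_congr rfl fun j _ => ?_
        simp only [mul_sub, Finset.sum_sub_distrib, ← Finset.sum_mul,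
          sum_row_of_mem_doublyStochastic hP, Finset.mul_sum, mul_left_comm (b j), one_mul]
    _ = _ := by
        rw [mul_sub, trace_sub, htrace, htrace, hBdiag]
        simp only [hdiag, diagonal_apply_eq, mul_sub, Finset.sum_sub_distrib]

theorem posSemidef_of_le_liftedAngle (hS : S.IsHermitian)
    (h : ((n : ℝ) - 1) * π / 2 ≤ liftedAngle S) : S.PosSemidef := by
  refine hS.posSemidef_iff_eigenvalues_nonneg.2 fun k => Real.arctan_nonneg.1 ?_
  rw [liftedAngle_eq_sum hS, ← Finset.add_sum_erase _ _ (Finset.mem_univ k)] at h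
  have hsum := Finset.sum_le_card_nsmul (Finset.univ.erase k)
    (fun j => Real.arctan (hS.eigenvalues j)) (π / 2)
    fun j _ => (Real.arctan_lt_pi_div_two _).le
  rw [Finset.card_erase_of_mem (Finset.mem_univ k), Finset.card_univ, Fintype.card_fin,
    nsmul_eq_mul, Nat.cast_sub k.pos, Nat.cast_one] at hsum
  linarith

end Supergradient

section MaximumPrinciple

variable {m : ℕ} {M : Matrix (Fin m) (Fin m) ℝ} {f : (Fin m → ℝ) → ℝ} {x : Fin m → ℝ}

open scoped MatrixOrder in
theorem trace_mul_nonneg {A : Matrix (Fin m) (Fin m) ℝ} (hM : M.PosSemidef) (hA : A.PosSemidef) :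
    0 ≤ (M * A).trace := by
  obtain ⟨B, rfl⟩ := CStarAlgebra.nonneg_iff_eq_star_mul_self.1 hM.nonneg
  rw [mul_assoc, trace_mul_comm]
  exact (hA.mul_mul_conjTranspose_same B).trace_nonneg

theorem dotProduct_hessianMatrix_mulVec_nonpos (hf : ContDiffAt ℝ 2 f x) (hmax : IsLocalMax f x)
    (z : Fin m → ℝ) : z ⬝ᵥ hessianMatrix f x *ᵥ z ≤ 0 := by
  have hbound (ε : ℝ) (hε : 0 < ε) : z ⬝ᵥ hessianMatrix f x *ᵥ z ≤ ε * (z ⬝ᵥ z) := by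
    have hline : Tendsto (fun t : ℝ => x + t • z) (nhdsWithin 0 {0}ᶜ) (nhds x) := by
      have hcont : Continuous fun t : ℝ => x + t • z := by fun_prop
      simpa using (hcont.tendsto 0).mono_left nhdsWithin_le_nhds
    obtain ⟨t, ⟨htaylor, ht⟩, ht₀⟩ := ((hline.eventually
      ((eventually_le_quadraticAt hf.neg hε).and hmax)).and self_mem_nhdsWithin).exists
    have ht₀ : 0 < t ^ 2 := by positivity [show t ≠ 0 from ht₀]
    have hderiv : fderiv ℝ (fun y => -f y) x = 0 := hmax.neg.fderiv_eq_zero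
    rw [quadraticAt_add_smul_one, quadraticAt, hderiv, hessianMatrix_neg] at htaylor
    simp only [add_sub_cancel_left, _root_.zero_apply, neg_mulVec, mulVec_smul,
      dotProduct_neg, dotProduct_smul, smul_dotProduct, smul_eq_mul] at htaylor
    nlinarith
  have hlim : Tendsto (fun ε : ℝ => ε * (z ⬝ᵥ z)) (nhdsWithin 0 (Set.Ioi 0)) (nhds 0) := by
    simpa using (tendsto_id.mul_const (z ⬝ᵥ z)).mono_left
      (nhdsWithin_le_nhds (a := (0 : ℝ)) (s := Set.Ioi 0))
  exact ge_of_tendsto hlim (eventually_mem_nhdsWithin.mono hbound)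

theorem trace_mul_hessianMatrix_nonpos (hM : M.PosSemidef) (hf : ContDiffAt ℝ 2 f x)
    (hmax : IsLocalMax f x) : (M * hessianMatrix f x).trace ≤ 0 := by
  have hneg : (-hessianMatrix f x).PosSemidef :=
    .of_dotProduct_mulVec_nonneg (isHermitian_iff_isSymm.2 (isSymm_hessianMatrix hf).neg)
      fun z => by simpa [neg_mulVec] using dotProduct_hessianMatrix_mulVec_nonpos hf hmax z
  simpa using trace_mul_nonneg hM hneg

theorem exists_mem_frontier_le (hM : M.PosSemidef) (htr : 0 < M.trace) (hf : ContDiff ℝ 2 f)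
    (hsub : ∀ x, 0 ≤ (M * hessianMatrix f x).trace) {K : Set (Fin m → ℝ)} (hK : IsCompact K)
    (hx : x ∈ K) : ∃ z ∈ frontier K, f x ≤ f z := by
  by_contra! hlt
  obtain ⟨b, hb, hfb⟩ : ∃ b < f x, ∀ z ∈ frontier K, f z ≤ b := by
    rcases (frontier K).eq_empty_or_nonempty with hemp | hne
    · exact ⟨f x - 1, sub_one_lt _, by simp [hemp]⟩
    · obtain ⟨z, hz, hmax⟩ := (hK.of_isClosed_subset isClosed_frontier
        hK.isClosed.frontier_subset).exists_isMaxOn hne hf.continuous.continuousOn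
      exact ⟨f z, hlt z hz, fun y hy => hmax hy⟩
  obtain ⟨ε, hε, x₀, hx₀, c, heq, hle⟩ := exists_interior_contact (v := fun y => (f y : EReal)) hK
    (fun y _ => EReal.coe_ne_top _)
    (continuous_coe_real_ereal.comp hf.continuous).continuousOn.upperSemicontinuousOn
    (continuousOn_const (c := b)) (fun z hz => EReal.coe_le_coe_iff.2 (hfb z hz)) hx
    (EReal.coe_lt_coe_iff.2 hb)
  simp only [EReal.coe_le_coe_iff, EReal.coe_eq_coe_iff] at heq hle
  set q : (Fin m → ℝ) → ℝ := quadraticAt 0 0 0 ((2 * ε) • 1)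
  have hq : ContDiff ℝ 2 q := contDiff_quadraticAt
  have hqε (y) : q y = ε * (y ⬝ᵥ y) := by
    simp [q, quadraticAt, smul_mulVec]
    ring
  have hmax : IsLocalMax (fun y => f y + q y) x₀ := by
    filter_upwards [mem_interior_iff_mem_nhds.1 hx₀] with y hy
    linarith [hle y hy, hqε y, hqε x₀]
  have htrace := trace_mul_hessianMatrix_nonpos hM (hf.add hq).contDiffAt hmax
  rw [hessianMatrix_add hf.contDiffAt hq.contDiffAt, hessianMatrix_quadraticAt (isSymm_one.smul _),
    mul_add, trace_add, Matrix.mul_smul, Matrix.mul_one, trace_smul, smul_eq_mul] at htrace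
  linarith [hsub x₀, mul_pos (mul_pos two_pos hε) htr]

end MaximumPrinciple

section EllipticPolynomials

open MvPolynomial

theorem totalDegree_pderiv_le {σ R : Type*} [CommSemiring R] (i : σ) (p : MvPolynomial σ R) :
    (pderiv i p).totalDegree ≤ p.totalDegree - 1 := by
  conv_lhs => rw [p.as_sum, map_sum]
  refine totalDegree_finsetSum_le fun s hs => ?_
  rw [pderiv_monomial]
  by_cases hsi : s i = 0
  · simp [hsi]
  refine (totalDegree_monomial_le _ _).trans ?_
  have hle : Finsupp.single i 1 ≤ s := Finsupp.single_le_iff.2 (Nat.one_le_iff_ne_zero.2 hsi)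
  have hdegree : (s - Finsupp.single i 1).degree + 1 = s.degree := by
    simpa using congrArg Finsupp.degree (tsub_add_cancel_of_le hle)
  exact Nat.le_sub_one_of_lt (Nat.lt_of_lt_of_le (Nat.lt_of_succ_le hdegree.le) (le_totalDegree hs))

variable {n : ℕ} {M : Matrix (Fin n) (Fin n) ℝ}

theorem hasFDerivAt_eval (p : MvPolynomial (Fin n) ℝ) (x : Fin n → ℝ) :
    HasFDerivAt (fun x => eval x p)
      (∑ j, eval x (pderiv j p) • (ContinuousLinearMap.proj j : (Fin n → ℝ) →L[ℝ] ℝ)) x := by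
  induction p using MvPolynomial.induction_on with
  | C a => simpa using hasFDerivAt_const a x
  | add p q hp hq => simpa [add_smul, Finset.sum_add_distrib] using hp.fun_add hq
  | mul_X p i hp =>
    simpa [pderiv_X, Pi.single_apply, add_smul, mul_smul, Finset.sum_add_distrib, Finset.smul_sum,
      apply_ite, ite_smul] using
      hp.fun_mul (hasFDerivAt_apply i x)

theorem contDiff_eval {k : WithTop ℕ∞} (p : MvPolynomial (Fin n) ℝ) :
    ContDiff ℝ k fun x => eval x p := by
  induction p using MvPolynomial.induction_on with
  | C a => simpa using contDiff_const
  | add p q hp hq => simpa using hp.add hq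
  | mul_X p i hp => simpa using hp.mul (contDiff_apply ℝ ℝ i)

theorem hessianMatrix_eval (p : MvPolynomial (Fin n) ℝ) (x : Fin n → ℝ) :
    hessianMatrix (fun x => eval x p) x = of fun i j => eval x (pderiv i (pderiv j p)) := by
  have hderiv (j : Fin n) := (hasFDerivAt_eval (pderiv j p) x).smul_const
    (ContinuousLinearMap.proj j : (Fin n → ℝ) →L[ℝ] ℝ)
  rw [hessianMatrix_eq_of_hasFDerivAt (hasFDerivAt_eval p)
    (HasFDerivAt.fun_sum fun j _ => hderiv j)]
  ext i j
  simp [_root_.sum_apply, Pi.single_apply]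

/-- The constant coefficient operator `p ↦ ∑ i j, M i j ∂ᵢ∂ⱼ p` on polynomials. -/
noncomputable def ellipticOp (M : Matrix (Fin n) (Fin n) ℝ) :
    MvPolynomial (Fin n) ℝ →ₗ[ℝ] MvPolynomial (Fin n) ℝ :=
  ∑ i, ∑ j, M i j • ((pderiv j).toLinearMap ∘ₗ (pderiv i).toLinearMap)

theorem trace_mul_hessianMatrix_eval (p : MvPolynomial (Fin n) ℝ) (x : Fin n → ℝ) :
    (M * hessianMatrix (fun x => eval x p) x).trace = eval x (ellipticOp M p) := by
  simp [hessianMatrix_eval, ellipticOp, trace, mul_apply, smul_eval]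

theorem totalDegree_ellipticOp_le (p : MvPolynomial (Fin n) ℝ) :
    (ellipticOp M p).totalDegree ≤ p.totalDegree - 2 := by
  simp only [ellipticOp, LinearMap.sum_apply, LinearMap.smul_apply]
  refine totalDegree_finsetSum_le fun i _ => totalDegree_finsetSum_le fun j _ =>
    (totalDegree_smul_le _ _).trans ?_
  exact (totalDegree_pderiv_le j _).trans (Nat.sub_le_sub_right (totalDegree_pderiv_le i p) 1)

theorem eval_eq_zero_of_ellipticOp_eq_zero (hM : M.PosSemidef) (htr : 0 < M.trace)
    {p : MvPolynomial (Fin n) ℝ} (hp : ellipticOp M p = 0) {K : Set (Fin n → ℝ)}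
    (hK : IsCompact K) (hp₀ : ∀ x ∈ frontier K, eval x p = 0) : ∀ x ∈ K, eval x p = 0 := by
  have hnonpos (q : MvPolynomial (Fin n) ℝ) (hq : ellipticOp M q = 0)
      (hq₀ : ∀ x ∈ frontier K, eval x q = 0) : ∀ x ∈ K, eval x q ≤ 0 := fun x hx => by
    obtain ⟨z, hz, hle⟩ := exists_mem_frontier_le hM htr (contDiff_eval q)
      (fun y => by rw [trace_mul_hessianMatrix_eval, hq, map_zero]) hK hx
    exact hle.trans_eq (hq₀ z hz)
  refine fun x hx => le_antisymm (hnonpos p hp hp₀ x hx) ?_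
  simpa using hnonpos (-p) (by rw [map_neg, hp, neg_zero])
    (fun y hy => by rw [map_neg, hp₀ y hy, neg_zero]) x hx

theorem eq_zero_of_eventually_eval_eq_zero {p : MvPolynomial (Fin n) ℝ} {x₀ : Fin n → ℝ}
    (h : ∀ᶠ x in nhds x₀, eval x p = 0) : p = 0 := by
  obtain ⟨ε, hε, hball⟩ := Metric.eventually_nhds_iff.1 h
  refine funext_set (fun i => Set.Ioo (x₀ i) (x₀ i + ε))
    (fun i => Set.Ioo_infinite (lt_add_of_pos_right _ hε)) fun x hx => ?_
  rw [map_zero]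
  refine hball ((dist_pi_lt_iff hε).2 fun i => ?_)
  have hi := hx i (Set.mem_univ i)
  rw [Real.dist_eq, abs_lt]
  constructor <;> linarith [hi.1, hi.2]

-- `p ↦ ellipticOp M (ρ * p)` preserves a finite-dimensional space of polynomials of bounded degree
-- and is injective there by the maximum principle, hence surjective.
theorem exists_ellipticOp_eq_zero_eval_eq (hM : M.PosSemidef) (htr : 0 < M.trace)
    {ρ : MvPolynomial (Fin n) ℝ} (hρ : ρ.totalDegree ≤ 2) (hK : IsCompact {x | 0 ≤ eval x ρ})
    {x₀ : Fin n → ℝ} (hx₀ : 0 < eval x₀ ρ) (q : MvPolynomial (Fin n) ℝ) :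
    ∃ h, ellipticOp M h = 0 ∧ ∀ z, eval z ρ = 0 → eval z h = eval z q := by
  set W := restrictTotalDegree (Fin n) ℝ q.totalDegree
  set T : MvPolynomial (Fin n) ℝ →ₗ[ℝ] MvPolynomial (Fin n) ℝ :=
    ellipticOp M ∘ₗ LinearMap.mulLeft ℝ ρ
  have hmaps : ∀ p ∈ W, T p ∈ W := fun p hp => by
    rw [mem_restrictTotalDegree] at hp ⊢
    have hmul := totalDegree_mul ρ p
    have hop := totalDegree_ellipticOp_le (M := M) (ρ * p)
    exact hop.trans (by omega)
  have hinj : Function.Injective (T.restrict hmaps) := by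
    refine (injective_iff_map_eq_zero _).2 fun p hp => Subtype.ext ?_
    have hTp : ellipticOp M (ρ * p) = 0 := congrArg Subtype.val hp
    have hzero := eval_eq_zero_of_ellipticOp_eq_zero hM htr hTp hK fun z hz => by
      have hρz : (0 : ℝ) = eval z ρ :=
        frontier_le_subset_eq continuous_const (continuous_eval ρ) hz
      rw [map_mul, ← hρz, zero_mul]
    refine eq_zero_of_eventually_eval_eq_zero (x₀ := x₀) ?_
    filter_upwards [(continuous_eval ρ).continuousAt.eventually_const_lt hx₀] with x hx
    have hzero_x := hzero x hx.le
    rw [map_mul] at hzero_x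
    exact (mul_eq_zero.1 hzero_x).resolve_left hx.ne'
  have hq : ellipticOp M q ∈ W := by
    rw [mem_restrictTotalDegree]
    exact (totalDegree_ellipticOp_le q).trans (Nat.sub_le _ _)
  obtain ⟨p, hp⟩ := LinearMap.injective_iff_surjective.1 hinj ⟨_, hq⟩
  have hTp : ellipticOp M (ρ * p) = ellipticOp M q := congrArg Subtype.val hp
  exact ⟨q - ρ * p, by rw [map_sub, hTp, sub_self], fun z hz => by simp [hz]⟩

end EllipticPolynomials

section PolynomialSelection

open MvPolynomial

variable {n : ℕ} {S : Set (Fin n → ℝ)}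

theorem exists_eval_dist_lt (hS : IsCompact S) (g : C(S, ℝ)) {ε : ℝ} (hε : 0 < ε) :
    ∃ q : MvPolynomial (Fin n) ℝ, ∀ z : S, dist (g z) (eval (z : Fin n → ℝ) q) < ε := by
  have : CompactSpace S := isCompact_iff_compactSpace.1 hS
  let restr : MvPolynomial (Fin n) ℝ →ₐ[ℝ] C(S, ℝ) :=
    aeval fun i => ⟨fun z => (z : Fin n → ℝ) i, (continuous_apply i).comp continuous_subtype_val⟩
  have hrestr (p) (z : S) : restr p z = eval (z : Fin n → ℝ) p := by
    induction p using MvPolynomial.induction_on <;> simp_all [restr]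
  have hsep : restr.range.SeparatesPoints := fun x y hxy => by
    obtain ⟨i, hi⟩ := Function.ne_iff.1 (Subtype.coe_injective.ne hxy)
    exact ⟨restr (X i), ⟨_, ⟨X i, rfl⟩, rfl⟩, by simpa [hrestr] using hi⟩
  obtain ⟨⟨_, q, rfl⟩, hq⟩ :=
    ContinuousMap.exists_mem_subalgebra_near_continuousMap_of_separatesPoints _ hsep g ε hε
  refine ⟨q, fun z => ?_⟩
  rw [← hrestr, dist_comm]
  exact (ContinuousMap.dist_apply_le_dist z).trans_lt ((dist_eq_norm _ _).trans_lt hq)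

theorem exists_mvPolynomial_forall_mem (hS : IsCompact S) {W : Set (ℝ × (Fin n → ℝ))}
    (hW : IsOpen W) (hconv : ∀ z ∈ S, Convex ℝ {t | (t, z) ∈ W})
    (hne : ∀ z ∈ S, ∃ t, (t, z) ∈ W) :
    ∃ q : MvPolynomial (Fin n) ℝ, ∀ z ∈ S, (eval z q, z) ∈ W := by
  have : CompactSpace S := isCompact_iff_compactSpace.1 hS
  obtain ⟨g, hg⟩ := exists_continuous_forall_mem_convex_of_local_const (X := S)
    (t := fun z => {t | (t, (z : Fin n → ℝ)) ∈ W}) (fun z => hconv z z.2) fun z => by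
      obtain ⟨t, ht⟩ := hne z z.2
      have hcont : Continuous fun y : S => (t, (y : Fin n → ℝ)) := by fun_prop
      exact ⟨t, hcont.continuousAt.eventually (hW.mem_nhds ht)⟩
  obtain ⟨δ, hδ, hthick⟩ :=
    (isCompact_range (f := fun z : S => (g z, (z : Fin n → ℝ))) (by fun_prop))
      |>.exists_thickening_subset_open hW (Set.range_subset_iff.2 hg)
  obtain ⟨q, hq⟩ := exists_eval_dist_lt hS g hδ
  refine ⟨q, fun z hz => hthick (Metric.mem_thickening_iff.2 ⟨_, ⟨⟨z, hz⟩, rfl⟩, ?_⟩)⟩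
  rw [Prod.dist_eq, dist_self, dist_comm]
  exact max_lt (hq ⟨z, hz⟩) hδ

theorem exists_ellipticOp_eq_zero_forall_mem {M : Matrix (Fin n) (Fin n) ℝ} (hM : M.PosSemidef)
    (htr : 0 < M.trace) {ρ : MvPolynomial (Fin n) ℝ} (hρ : ρ.totalDegree ≤ 2)
    (hK : IsCompact {x | 0 ≤ eval x ρ}) {x₀ : Fin n → ℝ} (hx₀ : 0 < eval x₀ ρ)
    {W : Set (ℝ × (Fin n → ℝ))} (hW : IsOpen W)
    (hconv : ∀ z, eval z ρ = 0 → Convex ℝ {t | (t, z) ∈ W})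
    (hne : ∀ z, eval z ρ = 0 → ∃ t, (t, z) ∈ W) :
    ∃ h, ellipticOp M h = 0 ∧ ∀ z, eval z ρ = 0 → (eval z h, z) ∈ W := by
  have hS : IsCompact {z | eval z ρ = 0} := hK.of_isClosed_subset
    (isClosed_eq (continuous_eval ρ) continuous_const) fun z hz => ge_of_eq hz
  obtain ⟨q, hq⟩ := exists_mvPolynomial_forall_mem hS hW hconv hne
  obtain ⟨h, hh, hhq⟩ := exists_ellipticOp_eq_zero_eval_eq hM htr hρ hK hx₀ q
  exact ⟨h, hh, fun z hz => hhq z hz ▸ hq z hz⟩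

end PolynomialSelection

section EuclideanBall

open MvPolynomial

variable {n : ℕ} {x₀ : Fin n → ℝ} {r : ℝ}

/-- The closed ball for the Euclidean distance; the norm of `Fin n → ℝ` is the sup norm, whose
spheres are not quadrics. -/
def euclideanClosedBall (x₀ : Fin n → ℝ) (r : ℝ) : Set (Fin n → ℝ) :=
  {x | (x - x₀) ⬝ᵥ (x - x₀) ≤ r ^ 2}

theorem self_mem_euclideanClosedBall : x₀ ∈ euclideanClosedBall x₀ r := by
  simp [euclideanClosedBall, sq_nonneg]

theorem euclideanClosedBall_subset_closedBall (hr : 0 ≤ r) :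
    euclideanClosedBall x₀ r ⊆ Metric.closedBall x₀ r := fun x hx => by
  rw [mem_closedBall_iff_norm]
  exact (sq_le_sq₀ (norm_nonneg _) hr).1 ((norm_sq_le_dotProduct_self _).trans hx)

theorem continuous_dotProduct_sub_self (x₀ : Fin n → ℝ) :
    Continuous fun x => (x - x₀) ⬝ᵥ (x - x₀) :=
  (continuous_id.sub continuous_const).dotProduct (continuous_id.sub continuous_const)

theorem isCompact_euclideanClosedBall (hr : 0 ≤ r) : IsCompact (euclideanClosedBall x₀ r) :=
  (isCompact_closedBall x₀ r).of_isClosed_subset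
    (isClosed_le (continuous_dotProduct_sub_self x₀) continuous_const)
    (euclideanClosedBall_subset_closedBall hr)

theorem dotProduct_sub_self_of_mem_frontier {x : Fin n → ℝ}
    (hx : x ∈ frontier (euclideanClosedBall x₀ r)) : (x - x₀) ⬝ᵥ (x - x₀) = r ^ 2 :=
  frontier_le_subset_eq (continuous_dotProduct_sub_self x₀) continuous_const hx

theorem exists_harmonic_forall_mem {M : Matrix (Fin n) (Fin n) ℝ} (hM : M.PosSemidef)
    (htr : 0 < M.trace) (hr : 0 < r) {W : Set (ℝ × (Fin n → ℝ))} (hW : IsOpen W)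
    (hconv : ∀ z, (z - x₀) ⬝ᵥ (z - x₀) = r ^ 2 → Convex ℝ {t | (t, z) ∈ W})
    (hne : ∀ z, (z - x₀) ⬝ᵥ (z - x₀) = r ^ 2 → ∃ t, (t, z) ∈ W) :
    ∃ h : (Fin n → ℝ) → ℝ, ContDiff ℝ 2 h ∧ (∀ x, (M * hessianMatrix h x).trace = 0) ∧
      ∀ z, (z - x₀) ⬝ᵥ (z - x₀) = r ^ 2 → (h z, z) ∈ W := by
  set ρ : MvPolynomial (Fin n) ℝ := C (r ^ 2) - ∑ i, (X i - C (x₀ i)) ^ 2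
  have heval (z : Fin n → ℝ) : eval z ρ = r ^ 2 - (z - x₀) ⬝ᵥ (z - x₀) := by
    simp [ρ, dotProduct, sq]
  have hdegree : ρ.totalDegree ≤ 2 := by
    refine (totalDegree_sub _ _).trans (max_le ?_ (totalDegree_finsetSum_le fun i _ => ?_))
    · rw [totalDegree_C]
      exact Nat.zero_le 2
    · have hlin := (totalDegree_sub_C_le (X i) (x₀ i)).trans_eq (totalDegree_X i)
      exact (totalDegree_pow _ 2).trans (by omega)
  have hball : {x | 0 ≤ eval x ρ} = euclideanClosedBall x₀ r := by
    ext x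
    simp [heval, euclideanClosedBall]
  have hsphere (z : Fin n → ℝ) : eval z ρ = 0 ↔ (z - x₀) ⬝ᵥ (z - x₀) = r ^ 2 := by
    rw [heval, sub_eq_zero, eq_comm]
  simp only [← hsphere] at hconv hne ⊢
  obtain ⟨h, hh, hmem⟩ := exists_ellipticOp_eq_zero_forall_mem (x₀ := x₀) hM htr hdegree
    (hball ▸ isCompact_euclideanClosedBall hr.le) (by simpa [heval] using pow_pos hr 2) hW hconv hne
  exact ⟨fun x => eval x h, contDiff_eval h,
    fun x => by rw [trace_mul_hessianMatrix_eval, hh, map_zero], hmem⟩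

end EuclideanBall

section Barrier

variable {n : ℕ} {φ h : (Fin n → ℝ) → ℝ} {N : ℝ}

theorem contDiff_comp_tail {k : WithTop ℕ∞} (hφ : ContDiff ℝ k φ) :
    ContDiff ℝ k fun y : Fin (n + 1) → ℝ => φ (Fin.tail y) :=
  hφ.comp (contDiff_pi.2 fun i => contDiff_apply ℝ ℝ i.succ)

theorem contDiff_graph {k : WithTop ℕ∞} (hh : ContDiff ℝ k h) :
    ContDiff ℝ k fun y : Fin (n + 1) → ℝ => y 0 - h (Fin.tail y) :=
  (contDiff_apply ℝ ℝ 0).sub (contDiff_comp_tail hh)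

theorem hessianMatrix_comp_tail (hφ : ContDiff ℝ 2 φ) (y : Fin (n + 1) → ℝ) :
    hessianMatrix (fun y => φ (Fin.tail y)) y =
      of (Fin.cons 0 fun i => Fin.cons 0 (hessianMatrix φ (Fin.tail y) i)) := by
  set P : (Fin (n + 1) → ℝ) →L[ℝ] Fin n → ℝ := .pi fun i => .proj i.succ
  have hzero : P (Pi.single 0 1) = 0 := by
    ext i
    simp [P]
  have hsucc (j : Fin n) : P (Pi.single j.succ 1) = Pi.single j 1 := by
    ext i
    simp [P, Pi.single_apply]
  have hcomp (v w) : iteratedFDeriv ℝ 2 (φ ∘ P) y ![v, w] =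
      iteratedFDeriv ℝ 2 φ (P y) ![P v, P w] := by
    rw [P.iteratedFDeriv_comp_right hφ y le_rfl,
      ContinuousMultilinearMap.compContinuousLinearMap_apply]
    congr 1
    ext i
    fin_cases i <;> rfl
  ext i j
  refine (hcomp _ _).trans ?_
  refine Fin.cases ?_ (fun i => Fin.cases ?_ (fun j => ?_) j) i
  · rw [hzero]
    exact (iteratedFDeriv ℝ 2 φ (P y)).map_coord_zero 0 rfl
  · rw [hzero]
    exact (iteratedFDeriv ℝ 2 φ (P y)).map_coord_zero 1 rfl
  · rw [hsucc, hsucc]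
    rfl

theorem hessianMatrix_sq {m : ℕ} {w : (Fin m → ℝ) → ℝ} (hw : ContDiff ℝ 2 w) (y : Fin m → ℝ) :
    hessianMatrix (fun y => w y ^ 2) y = of fun i j =>
      2 * (w y * hessianMatrix w y i j +
        fderiv ℝ w y (Pi.single i 1) * fderiv ℝ w y (Pi.single j 1)) := by
  have hderiv (z) := (hw.differentiable (by simp) z).hasFDerivAt
  have hderiv₂ := ((hw.fderiv_right (m := 1) le_rfl).differentiable (by simp) y).hasFDerivAt
  have hsq (z) : HasFDerivAt (fun z => w z ^ 2) ((2 * w z) • fderiv ℝ w z) z := by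
    simpa using (hderiv z).pow 2
  rw [hessianMatrix_eq_of_hasFDerivAt hsq (((hderiv y).const_mul 2).fun_smul hderiv₂)]
  ext i j
  simp [hessianMatrix_apply]
  ring

/-- The barrier `φ(x) + (N/2)(t - h(x))²` around the graph `t = h(x)`, as a function of
`y = (t, x)`. -/
noncomputable def barrier (φ h : (Fin n → ℝ) → ℝ) (N : ℝ) (y : Fin (n + 1) → ℝ) : ℝ :=
  φ (Fin.tail y) + N / 2 * (y 0 - h (Fin.tail y)) ^ 2

theorem contDiff_barrier {k : WithTop ℕ∞} (hφ : ContDiff ℝ k φ) (hh : ContDiff ℝ k h) :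
    ContDiff ℝ k (barrier φ h N) :=
  (contDiff_comp_tail hφ).add (contDiff_const.mul ((contDiff_graph hh).pow 2))

theorem hessianMatrix_graph (hh : ContDiff ℝ 2 h) (y : Fin (n + 1) → ℝ) :
    hessianMatrix (fun y : Fin (n + 1) → ℝ => y 0 - h (Fin.tail y)) y =
      -hessianMatrix (fun y => h (Fin.tail y)) y := by
  have hlinear : hessianMatrix (fun y : Fin (n + 1) → ℝ => y 0) y = 0 := by
    rw [hessianMatrix_eq_of_hasFDerivAt (hasFDerivAt_apply 0) (hasFDerivAt_const _ _)]
    rfl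
  rw [hessianMatrix_sub (contDiff_apply ℝ ℝ 0).contDiffAt (contDiff_comp_tail hh).contDiffAt,
    hlinear, zero_sub]

theorem fderiv_graph_single_zero (hh : Differentiable ℝ h) (y : Fin (n + 1) → ℝ) :
    fderiv ℝ (fun y : Fin (n + 1) → ℝ => y 0 - h (Fin.tail y)) y (Pi.single 0 1) = 1 := by
  set P : (Fin (n + 1) → ℝ) →L[ℝ] Fin n → ℝ := .pi fun i => .proj i.succ
  have hderiv : HasFDerivAt (fun y : Fin (n + 1) → ℝ => y 0 - h (Fin.tail y))
      (.proj 0 - fderiv ℝ h (P y) ∘L P) y :=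
    (hasFDerivAt_apply 0 y).sub ((hh (P y)).hasFDerivAt.comp y P.hasFDerivAt)
  have hzero : P (Pi.single 0 1) = 0 := by
    ext i
    simp [P]
  simp [hderiv.fderiv, hzero]

theorem exists_hessianMatrix_barrier_eq (hφ : ContDiff ℝ 2 φ) (hh : ContDiff ℝ 2 h) (N : ℝ)
    (y : Fin (n + 1) → ℝ) : ∃ g : Fin (n + 1) → ℝ, g 0 = 1 ∧
      hessianMatrix (barrier φ h N) y = of (Fin.cons 0 fun i => Fin.cons 0
        ((hessianMatrix φ (Fin.tail y) -
          (N * (y 0 - h (Fin.tail y))) • hessianMatrix h (Fin.tail y)) i)) +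
        N • vecMulVec g g := by
  set w : (Fin (n + 1) → ℝ) → ℝ := fun y => y 0 - h (Fin.tail y)
  have hw : ContDiff ℝ 2 w := contDiff_graph hh
  have hsum : hessianMatrix (barrier φ h N) y = hessianMatrix (fun y => φ (Fin.tail y)) y +
      (N / 2) • hessianMatrix (fun y => w y ^ 2) y := by
    rw [← hessianMatrix_const_mul _ (hw.pow 2).contDiffAt, ← hessianMatrix_add
      (contDiff_comp_tail hφ).contDiffAt (contDiff_const.mul (hw.pow 2)).contDiffAt]
    rfl
  refine ⟨fun i => fderiv ℝ w y (Pi.single i 1),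
    fderiv_graph_single_zero (hh.differentiable (by simp)) y, ?_⟩
  rw [hsum, hessianMatrix_sq hw, hessianMatrix_graph hh, hessianMatrix_comp_tail hφ,
    hessianMatrix_comp_tail hh]
  ext i j
  refine Fin.cases ?_ (fun i => ?_) i <;> refine Fin.cases ?_ (fun j => ?_) j <;>
    simp [vecMulVec_apply, w] <;> ring

theorem schurCompl_add_smul_vecMulVec (N : ℝ) (S : Matrix (Fin n) (Fin n) ℝ)
    {g : Fin (n + 1) → ℝ} (hg : g 0 = 1) :
    schurCompl (of (Fin.cons 0 fun i => Fin.cons 0 (S i)) + N • vecMulVec g g) = S := by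
  ext i j
  simp [schurCompl, vecMulVec_apply, hg]
  field_simp
  ring

-- In the direction `M` the barrier has the same second order trace as `φ`, because `h` is
-- `M`-harmonic; concavity of the angle does the rest.
theorem hessianMatrix_barrier_notMem_calF {c : ℝ} (hc : (n : ℝ) * π / 2 ≤ c)
    {B M : Matrix (Fin n) (Fin n) ℝ} (hB : liftedAngle B < c - π / 2)
    (hM : ∀ S : Matrix (Fin n) (Fin n) ℝ, S.PosSemidef →
      liftedAngle S - liftedAngle B ≤ (M * (S - B)).trace)
    (hφ : ContDiff ℝ 2 φ) (hh : ContDiff ℝ 2 h) (hN : 0 < N) {y : Fin (n + 1) → ℝ}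
    (hφB : hessianMatrix φ (Fin.tail y) = B)
    (hharm : (M * hessianMatrix h (Fin.tail y)).trace = 0) :
    hessianMatrix (barrier φ h N) y ∉ calF n c := by
  rintro ⟨hsymm, hle⟩
  obtain ⟨g, hg, hHess⟩ := exists_hessianMatrix_barrier_eq hφ hh N y
  have hcorner : hessianMatrix (barrier φ h N) y 0 0 = N := by simp [hHess, vecMulVec_apply, hg]
  have hschur := schurCompl_add_smul_vecMulVec N (hessianMatrix φ (Fin.tail y) -
    (N * (y 0 - h (Fin.tail y))) • hessianMatrix h (Fin.tail y)) hg
  have hS := isSymm_schurCompl hsymm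
  rw [spaceTimeAngle_eq_pi_div_two_add hsymm (hN.trans_eq hcorner.symm)] at hle
  rw [← hHess, hφB] at hschur
  have hpsd := posSemidef_of_le_liftedAngle (isHermitian_iff_isSymm.2 hS) (by linarith)
  have htrace := hM _ hpsd
  rw [hschur, sub_sub_cancel_left, mul_neg, Matrix.mul_smul, trace_neg, trace_smul, hharm,
    smul_zero, neg_zero, ← hschur] at htrace
  linarith

end Barrier

section Tube

variable {n : ℕ} {h : (Fin n → ℝ) → ℝ} {K : Set (Fin n → ℝ)} {ρ : ℝ}

/-- The tube of vertical radius `ρ` around the graph `t = h(x)` over `K`. -/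
def tube (h : (Fin n → ℝ) → ℝ) (K : Set (Fin n → ℝ)) (ρ : ℝ) : Set (Fin (n + 1) → ℝ) :=
  {y | Fin.tail y ∈ K ∧ |y 0 - h (Fin.tail y)| ≤ ρ}

theorem isCompact_tube (hh : Continuous h) (hK : IsCompact K) : IsCompact (tube h K ρ) := by
  have himage : (fun p : (Fin n → ℝ) × ℝ => (Fin.cons (h p.1 + p.2) p.1 : Fin (n + 1) → ℝ)) ''
      K ×ˢ Set.Icc (-ρ) ρ = tube h K ρ := by
    ext y
    constructor
    · rintro ⟨⟨x, s⟩, ⟨hx, hs⟩, rfl⟩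
      exact ⟨by simpa using hx, by simpa [abs_le] using hs⟩
    · rintro ⟨hy, hy₀⟩
      exact ⟨(Fin.tail y, y 0 - h (Fin.tail y)), ⟨hy, abs_le.1 hy₀⟩, by simp⟩
  rw [← himage]
  exact (hK.prod isCompact_Icc).image (by fun_prop)

theorem frontier_tube_subset (hh : Continuous h) (hK : IsCompact K) :
    frontier (tube h K ρ) ⊆
      tube h (frontier K) ρ ∪ {y | Fin.tail y ∈ K ∧ |y 0 - h (Fin.tail y)| = ρ} := by
  have htail : Continuous (Fin.tail : (Fin (n + 1) → ℝ) → Fin n → ℝ) := by fun_prop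
  rintro y hy
  have hmem : y ∈ tube h K ρ := (isCompact_tube hh hK).isClosed.frontier_subset hy
  rcases hmem.2.eq_or_lt with heq | hlt
  · exact .inr ⟨hmem.1, heq⟩
  refine .inl ⟨⟨subset_closure hmem.1, fun hint => hy.2 ?_⟩, hmem.2⟩
  rw [mem_interior_iff_mem_nhds] at hint ⊢
  have hcont : ContinuousAt (fun y : Fin (n + 1) → ℝ => |y 0 - h (Fin.tail y)|) y :=
    (((continuous_apply 0).sub (hh.comp htail)).abs).continuousAt
  filter_upwards [htail.continuousAt hint, hcont.eventually_lt_const hlt] with z hz hz₀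
  exact ⟨hz, hz₀.le⟩

theorem exists_tube_subset (hh : Continuous h) (hK : IsCompact K) {W : Set (Fin (n + 1) → ℝ)}
    (hW : IsOpen W) (hgraph : ∀ x ∈ K, (Fin.cons (h x) x : Fin (n + 1) → ℝ) ∈ W) :
    ∃ ρ > 0, tube h K ρ ⊆ W := by
  obtain ⟨ρ, hρ, hthick⟩ := (hK.image (f := fun x => (Fin.cons (h x) x : Fin (n + 1) → ℝ))
    (by fun_prop)).exists_cthickening_subset_open hW (Set.image_subset_iff.2 hgraph)
  refine ⟨ρ, hρ, fun y hy => hthick (Metric.mem_cthickening_of_dist_le y _ _ _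
    ⟨_, hy.1, rfl⟩ ((dist_pi_le_iff hρ.le).2 fun i => ?_))⟩
  refine Fin.cases ?_ (fun i => ?_) i
  · simpa [Real.dist_eq] using hy.2
  · simp [Fin.tail, hρ.le]

theorem tube_mono {ρ₁ ρ₂ : ℝ} (hρ : ρ₁ ≤ ρ₂) : tube h K ρ₁ ⊆ tube h K ρ₂ :=
  fun _ hy => ⟨hy.1, hy.2.trans hρ⟩

end Tube

section Comparison

theorem isOpen_setOf_lt_coe {X : Type*} [TopologicalSpace X] {U : Set X} (hU : IsOpen U)
    {u : X → EReal} (husc : UpperSemicontinuousOn u U) {φ : X → ℝ} (hφ : Continuous φ) :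
    IsOpen {x | x ∈ U ∧ u x < φ x} := by
  refine isOpen_iff_mem_nhds.2 fun x ⟨hxU, hx⟩ => ?_
  obtain ⟨r, hur, hrφ⟩ := EReal.lt_iff_exists_real_btwn.1 hx
  have hnear := husc x hxU r hur
  rw [hU.nhdsWithin_eq hxU] at hnear
  filter_upwards [hU.mem_nhds hxU, hnear,
    hφ.continuousAt.eventually_const_lt (EReal.coe_lt_coe_iff.1 hrφ)] with y hyU hy hφy
  exact ⟨hyU, hy.trans (EReal.coe_lt_coe_iff.2 hφy)⟩

theorem exists_forall_le_coe_add {X : Type*} [TopologicalSpace X] {K : Set X} (hK : IsCompact K)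
    {u : X → EReal} (husc : UpperSemicontinuousOn u K) (htop : ∀ x ∈ K, u x ≠ ⊤) {φ : X → ℝ}
    (hφ : ContinuousOn φ K) : ∃ C > 0, ∀ x ∈ K, u x ≤ ((φ x + C : ℝ) : EReal) := by
  rcases K.eq_empty_or_nonempty with rfl | hne
  · exact ⟨1, one_pos, by simp⟩
  obtain ⟨x₁, hx₁, hmax⟩ := husc.exists_isMaxOn hne hK
  obtain ⟨x₂, -, hmin⟩ := hK.exists_isMinOn hne hφ
  refine ⟨max 1 ((u x₁).toReal - φ x₂), by positivity, fun x hx => ?_⟩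
  have hu : u x ≤ (u x₁).toReal := le_trans (hmax hx) (EReal.le_coe_toReal (htop x₁ hx₁))
  refine hu.trans (EReal.coe_le_coe_iff.2 ?_)
  linarith [le_max_right 1 ((u x₁).toReal - φ x₂), show φ x₂ ≤ φ x from hmin hx]

variable {n : ℕ} {U : Set (Fin (n + 1) → ℝ)} {u : (Fin (n + 1) → ℝ) → EReal}

theorem IsTypeF.le_on_graph {F : Set (Matrix (Fin (n + 1)) (Fin (n + 1)) ℝ)} (hu : IsTypeF F U u)
    (hU : IsOpen U) {φ h : (Fin n → ℝ) → ℝ} (hφ : ContDiff ℝ 2 φ) (hh : ContDiff ℝ 2 h)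
    (hF : ∀ N > 0, ∀ y ∈ U, hessianMatrix (barrier φ h N) y ∉ F) {K : Set (Fin n → ℝ)}
    (hK : IsCompact K) (hKU : ∀ x ∈ K, (Fin.cons (h x) x : Fin (n + 1) → ℝ) ∈ U)
    (hlt : ∀ x ∈ frontier K, u (Fin.cons (h x) x) < φ x) :
    ∀ x ∈ K, u (Fin.cons (h x) x) ≤ φ x := by
  have hφtail : Continuous fun y : Fin (n + 1) → ℝ => φ (Fin.tail y) :=
    (contDiff_comp_tail hφ).continuous
  obtain ⟨ρ₁, hρ₁, htube⟩ := exists_tube_subset hh.continuous hK hU hKU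
  obtain ⟨ρ₂, hρ₂, hlateral⟩ := exists_tube_subset hh.continuous
    (hK.of_isClosed_subset isClosed_frontier hK.isClosed.frontier_subset)
    (isOpen_setOf_lt_coe hU hu.2.1 hφtail)
    fun x hx => ⟨hKU x (hK.isClosed.frontier_subset hx), hlt x hx⟩
  set ρ := min ρ₁ ρ₂
  have hρ : 0 < ρ := lt_min hρ₁ hρ₂
  have htubeU : tube h K ρ ⊆ U := (tube_mono (min_le_left _ _)).trans htube
  have hcompact : IsCompact (tube h K ρ) := isCompact_tube hh.continuous hK
  obtain ⟨C, hC, hbound⟩ := exists_forall_le_coe_add hcompact (hu.2.1.mono htubeU)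
    (fun y hy => hu.1 y (htubeU hy)) hφtail.continuousOn
  have hN : 0 < 2 * C / ρ ^ 2 := by positivity
  intro x hx
  have hcomp := hu.le_of_hessianMatrix_notMem (contDiff_barrier hφ hh) (hF _ hN) hcompact htubeU
    (fun y hy => ?_) (Fin.cons (h x) x) ⟨by simpa using hx, by simpa using hρ.le⟩
  · simpa [barrier] using hcomp
  rcases frontier_tube_subset hh.continuous hK hy with hy | ⟨hyK, hyρ⟩
  · refine (hlateral (tube_mono (min_le_right _ _) hy)).2.le.trans (EReal.coe_le_coe_iff.2 ?_)
    exact le_add_of_nonneg_right (by positivity)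
  · refine (hbound y ⟨hyK, hyρ.le⟩).trans (EReal.coe_le_coe_iff.2 (le_of_eq ?_))
    rw [barrier, ← sq_abs (y 0 - h (Fin.tail y)), hyρ]
    field_simp

end Comparison

section Fibres

variable {n : ℕ} {c : ℝ}

theorem isOpen_setOf_mem_tail_mem {I : Set ℝ} (hI : IsOpen I) {D : Set (Fin n → ℝ)}
    (hD : IsOpen D) : IsOpen {y : Fin (n + 1) → ℝ | y 0 ∈ I ∧ Fin.tail y ∈ D} :=
  (hI.preimage (continuous_apply 0)).inter (hD.preimage (by fun_prop))

/-- The function `a - (k/2)(t - s)² + (N/2)|x - x₀|²` of `y = (t, x)`, a barrier concave in `t`. -/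
noncomputable def concaveBarrier (s : ℝ) (x₀ : Fin n → ℝ) (a k N : ℝ) :
    (Fin (n + 1) → ℝ) → ℝ :=
  quadraticAt (Fin.cons s x₀) a 0 (diagonal (Fin.cons (-k) fun _ => N))

theorem concaveBarrier_apply (s : ℝ) (x₀ : Fin n → ℝ) (a k N : ℝ) (y : Fin (n + 1) → ℝ) :
    concaveBarrier s x₀ a k N y =
      a - k / 2 * (y 0 - s) ^ 2 + N / 2 * ((Fin.tail y - x₀) ⬝ᵥ (Fin.tail y - x₀)) := by
  have hsum : ∑ i, (y (Fin.succ i) - x₀ i) * (N * (y (Fin.succ i) - x₀ i)) =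
      N * ∑ i, (y (Fin.succ i) - x₀ i) * (y (Fin.succ i) - x₀ i) := by
    rw [Finset.mul_sum]
    exact Finset.sum_congr rfl fun i _ => by ring
  simp only [concaveBarrier, quadraticAt, dotProduct, Fin.sum_univ_succ, mulVec_diagonal, Fin.tail,
    Pi.sub_apply, Fin.cons_zero, Fin.cons_succ, _root_.zero_apply, hsum]
  ring

theorem le_concaveBarrier {s d r k N : ℝ} (hk : 0 ≤ k) (hN : 0 ≤ N) (hr : 0 ≤ r) {x₀ : Fin n → ℝ}
    (a : ℝ) {y : Fin (n + 1) → ℝ} (hyd : |y 0 - s| ≤ d) (hyr : r ≤ ‖Fin.tail y - x₀‖) :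
    a - k / 2 * d ^ 2 + N / 2 * r ^ 2 ≤ concaveBarrier s x₀ a k N y := by
  have hd : (y 0 - s) ^ 2 ≤ d ^ 2 := sq_le_sq' (abs_le.1 hyd).1 (abs_le.1 hyd).2
  have hr : r ^ 2 ≤ (Fin.tail y - x₀) ⬝ᵥ (Fin.tail y - x₀) :=
    (pow_le_pow_left₀ hr hyr 2).trans (norm_sq_le_dotProduct_self _)
  rw [concaveBarrier_apply]
  gcongr

theorem concaveBarrier_cons_le (s : ℝ) (x₀ : Fin n → ℝ) (a : ℝ) {k : ℝ} (hk : 0 ≤ k) (N t : ℝ) :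
    concaveBarrier s x₀ a k N (Fin.cons t x₀) ≤ a := by
  simp only [concaveBarrier_apply, Fin.cons_zero, Fin.tail_cons, sub_self, zero_dotProduct,
    mul_zero, add_zero, sub_le_self_iff]
  positivity

theorem hessianMatrix_concaveBarrier_notMem_calF (hc : (n : ℝ) * π / 2 ≤ c) {k : ℝ} (hk : 0 < k)
    (s : ℝ) (x₀ : Fin n → ℝ) (a N : ℝ) (y : Fin (n + 1) → ℝ) :
    hessianMatrix (concaveBarrier s x₀ a k N) y ∉ calF n c := fun hmem => by
  have hangle := spaceTimeAngle_diagonal_lt (n := n) (d := Fin.cons (-k) fun _ => N) (by simpa)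
  rw [concaveBarrier, hessianMatrix_quadraticAt (isSymm_diagonal _)] at hmem
  exact (hc.trans hmem.2).not_gt hangle

theorem eventually_forall_cons_mem {W : Set (Fin (n + 1) → ℝ)} (hW : IsOpen W) {E : Set ℝ}
    (hE : IsCompact E) {x₀ : Fin n → ℝ} (hmem : ∀ t ∈ E, (Fin.cons t x₀ : Fin (n + 1) → ℝ) ∈ W) :
    ∀ᶠ x in nhds x₀, ∀ t ∈ E, (Fin.cons t x : Fin (n + 1) → ℝ) ∈ W := by
  have hcont : Continuous fun p : (Fin n → ℝ) × ℝ => (Fin.cons p.2 p.1 : Fin (n + 1) → ℝ) := by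
    fun_prop
  exact hE.eventually_forall_of_forall_eventually fun t ht =>
    hcont.continuousAt.eventually (hW.mem_nhds (hmem t ht))

variable {U : Set (Fin (n + 1) → ℝ)} {u : (Fin (n + 1) → ℝ) → EReal} {x₀ : Fin n → ℝ}

theorem IsTypeF.lt_of_endpoints_le (hc : (n : ℝ) * π / 2 ≤ c) (hu : IsTypeF (calF n c) U u)
    {s d r a b : ℝ} (hd : 0 < d) (hr : 0 < r) (hba : b < a)
    (hU : tube (fun _ => s) (Metric.closedBall x₀ r) d ⊆ U)
    (hend : ∀ x ∈ Metric.closedBall x₀ r, ∀ t, |t - s| = d → u (Fin.cons t x) ≤ b) {t : ℝ}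
    (ht : |t - s| ≤ d) : u (Fin.cons t x₀) < a := by
  have hK : IsCompact (Metric.closedBall x₀ r) := isCompact_closedBall x₀ r
  have hcompact : IsCompact (tube (fun _ => s) (Metric.closedBall x₀ r) d) :=
    isCompact_tube continuous_const hK
  obtain ⟨C, hC, hbound⟩ := exists_forall_le_coe_add hcompact (hu.2.1.mono hU)
    (fun y hy => hu.1 y (hU hy)) (continuousOn_const (c := b))
  obtain ⟨k, hk, hkd⟩ : ∃ k > 0, k / 2 * d ^ 2 = (a - b) / 2 :=
    ⟨(a - b) / d ^ 2, div_pos (sub_pos.2 hba) (by positivity), by field_simp⟩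
  obtain ⟨N, hN, hNr⟩ : ∃ N > 0, N / 2 * r ^ 2 = C := ⟨2 * C / r ^ 2, by positivity, by field_simp⟩
  have hbdry : ∀ y ∈ frontier (tube (fun _ => s) (Metric.closedBall x₀ r) d),
      u y ≤ concaveBarrier s x₀ ((a + b) / 2) k N y := by
    intro y hy
    rcases frontier_tube_subset continuous_const hK hy with ⟨hyr, hyd⟩ | ⟨hyr, hyd⟩
    · have hnorm := mem_sphere_iff_norm.1 (Metric.frontier_closedBall_subset_sphere hyr)
      have hψ := le_concaveBarrier hk.le hN.le hr.le ((a + b) / 2) hyd hnorm.ge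
      refine (hbound y (hcompact.isClosed.frontier_subset hy)).trans (EReal.coe_le_coe_iff.2 ?_)
      linarith
    · have hψ := le_concaveBarrier hk.le hN.le le_rfl ((a + b) / 2) hyd.le
        (norm_nonneg (Fin.tail y - x₀))
      have hend_y := hend _ hyr _ hyd
      rw [Fin.cons_self_tail] at hend_y
      refine hend_y.trans (EReal.coe_le_coe_iff.2 ?_)
      linarith
  calc u (Fin.cons t x₀)
      ≤ concaveBarrier s x₀ ((a + b) / 2) k N (Fin.cons t x₀) :=
        hu.le_of_hessianMatrix_notMem (ψ := concaveBarrier s x₀ _ k N) contDiff_quadraticAt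
          (fun y _ => hessianMatrix_concaveBarrier_notMem_calF hc hk s x₀ _ N y) hcompact hU hbdry
          (Fin.cons t x₀) ⟨by simpa using hr.le, by simpa using ht⟩
    _ ≤ ((a + b) / 2 : ℝ) := EReal.coe_le_coe_iff.2 (concaveBarrier_cons_le s x₀ _ hk.le N t)
    _ < a := EReal.coe_lt_coe_iff.2 (by linarith)

theorem IsTypeF.lt_of_endpoints_lt (hc : (n : ℝ) * π / 2 ≤ c) (hU : IsOpen U)
    (hu : IsTypeF (calF n c) U u) {s d a : ℝ} (hd : 0 < d)
    (hseg : ∀ t ∈ Metric.closedBall s d, (Fin.cons t x₀ : Fin (n + 1) → ℝ) ∈ U)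
    (hend : ∀ t ∈ Metric.sphere s d, u (Fin.cons t x₀) < a) {t : ℝ}
    (ht : t ∈ Metric.closedBall s d) : u (Fin.cons t x₀) < a := by
  obtain ⟨b, hba, hb⟩ : ∃ b < a, ∀ t ∈ Metric.sphere s d, u (Fin.cons t x₀) < b := by
    obtain ⟨b₁, hb₁, hb₁a⟩ := EReal.lt_iff_exists_real_btwn.1 (hend (s + d) (by simp [hd.le]))
    obtain ⟨b₂, hb₂, hb₂a⟩ := EReal.lt_iff_exists_real_btwn.1 (hend (s - d) (by simp [hd.le]))
    refine ⟨max b₁ b₂, max_lt (EReal.coe_lt_coe_iff.1 hb₁a) (EReal.coe_lt_coe_iff.1 hb₂a),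
      fun t ht => ?_⟩
    rw [Metric.mem_sphere, Real.dist_eq, abs_eq hd.le, sub_eq_iff_eq_add', sub_eq_iff_eq_add',
      ← sub_eq_add_neg] at ht
    rcases ht with rfl | rfl
    · exact hb₁.trans_le (EReal.coe_le_coe_iff.2 (le_max_left _ _))
    · exact hb₂.trans_le (EReal.coe_le_coe_iff.2 (le_max_right _ _))
  have hnear := (eventually_forall_cons_mem hU (isCompact_closedBall s d) hseg).and
    (eventually_forall_cons_mem (isOpen_setOf_lt_coe hU hu.2.1 (continuous_const (y := b)))
      (isCompact_sphere s d) fun t ht => ⟨hseg t (Metric.sphere_subset_closedBall ht), hb t ht⟩)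
  obtain ⟨r, hr, hball⟩ := Metric.nhds_basis_closedBall.mem_iff.1 hnear
  refine hu.lt_of_endpoints_le hc hd hr hba (fun y hy => ?_) (fun x hx t ht => ?_) ht
  · simpa using (hball hy.1).1 (y 0) hy.2
  · exact ((hball hx).2 t ht).2.le

theorem IsTypeF.convex_setOf_lt (hc : (n : ℝ) * π / 2 ≤ c) (hU : IsOpen U)
    (hu : IsTypeF (calF n c) U u)
    (hconv : Convex ℝ {t : ℝ | (Fin.cons t x₀ : Fin (n + 1) → ℝ) ∈ U}) (a : ℝ) :
    Convex ℝ {t : ℝ | Fin.cons t x₀ ∈ U ∧ u (Fin.cons t x₀) < a} := by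
  refine (Set.ordConnected_of_Ioo fun t₁ ht₁ t₂ ht₂ hlt t ht => ?_).convex
  have hball : Set.Icc t₁ t₂ = Metric.closedBall ((t₁ + t₂) / 2) ((t₂ - t₁) / 2) :=
    Real.Icc_eq_closedBall t₁ t₂
  have hseg := hconv.ordConnected.out ht₁.1 ht₂.1
  refine ⟨hseg (Set.Ioo_subset_Icc_self ht), hu.lt_of_endpoints_lt hc hU (s := (t₁ + t₂) / 2)
    (d := (t₂ - t₁) / 2) (by linarith) (fun τ hτ => hseg (hball ▸ hτ)) (fun τ hτ => ?_)
    (hball ▸ Set.Ioo_subset_Icc_self ht)⟩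
  rw [Metric.mem_sphere, Real.dist_eq, abs_eq (by linarith)] at hτ
  rcases hτ with hτ | hτ
  · convert ht₂.2 using 3
    linarith
  · convert ht₁.2 using 3
    linarith

end Fibres

section InfimumOverFibres

variable {n : ℕ} {c : ℝ} {I : Set ℝ} {D : Set (Fin n → ℝ)} {u : (Fin (n + 1) → ℝ) → EReal}
  {x₀ : Fin n → ℝ} {L : (Fin n → ℝ) →L[ℝ] ℝ} {B : Matrix (Fin n) (Fin n) ℝ}

theorem IsUpperContactJet.exists_lt_on_sphere {v : (Fin n → ℝ) → EReal} {ε : ℝ}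
    (hjet : IsUpperContactJet v x₀ L (B - ε • 1)) (hε : 0 < ε) (hD : D ∈ nhds x₀) :
    ∃ r > 0, ∃ b : ℝ, b < v x₀ ∧ euclideanClosedBall x₀ r ⊆ D ∧
      ∀ z, (z - x₀) ⬝ᵥ (z - x₀) = r ^ 2 → v z < quadraticAt x₀ b L B z := by
  obtain ⟨a, ha, hle⟩ := hjet
  obtain ⟨r, hr, hball⟩ := Metric.nhds_basis_closedBall.mem_iff.1 (inter_mem hD hle)
  have hsub := (euclideanClosedBall_subset_closedBall (x₀ := x₀) hr.le).trans hball
  have hεr : 0 < ε / 4 * r ^ 2 := by positivity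
  refine ⟨r, hr, a - ε / 4 * r ^ 2, ?_, fun z hz => (hsub hz).1, fun z hz => ?_⟩
  · rw [ha, EReal.coe_lt_coe_iff]
    linarith
  · refine (hsub hz.le).2.trans_lt (EReal.coe_lt_coe_iff.2 ?_)
    simp only [quadraticAt, sub_mulVec, smul_mulVec, one_mulVec, dotProduct_sub, dotProduct_smul,
      smul_eq_mul, hz]
    linarith

theorem forall_mem_of_forall_sphere_mem {M : Matrix (Fin n) (Fin n) ℝ} (hM : M.PosSemidef)
    (htr : 0 < M.trace) {h : (Fin n → ℝ) → ℝ} (hh : ContDiff ℝ 2 h)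
    (hharm : ∀ x, (M * hessianMatrix h x).trace = 0) (hI : Convex ℝ I) {r : ℝ} (hr : 0 ≤ r)
    (hsphere : ∀ z, (z - x₀) ⬝ᵥ (z - x₀) = r ^ 2 → h z ∈ I) :
    ∀ x ∈ euclideanClosedBall x₀ r, h x ∈ I := by
  intro x hx
  have hK := isCompact_euclideanClosedBall (x₀ := x₀) hr
  obtain ⟨z₁, hz₁, hle₁⟩ := exists_mem_frontier_le hM htr hh (fun y => (hharm y).ge) hK hx
  obtain ⟨z₂, hz₂, hle₂⟩ := exists_mem_frontier_le hM htr hh.neg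
    (fun y => by
      change 0 ≤ (M * hessianMatrix (fun x => -h x) y).trace
      rw [hessianMatrix_neg, Matrix.mul_neg, trace_neg, hharm, neg_zero]) hK hx
  exact hI.ordConnected.out (hsphere z₂ (dotProduct_sub_self_of_mem_frontier hz₂))
    (hsphere z₁ (dotProduct_sub_self_of_mem_frontier hz₁)) ⟨neg_le_neg_iff.1 hle₂, hle₁⟩

theorem IsTypeF.exists_harmonic_graph_lt (hc : (n : ℝ) * π / 2 ≤ c) (hI : IsOpen I)
    (hIconv : Convex ℝ I) (hD : IsOpen D) (hu : IsTypeF (calF n c) {y | y 0 ∈ I ∧ Fin.tail y ∈ D} u)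
    {M : Matrix (Fin n) (Fin n) ℝ} (hM : M.PosSemidef) (htr : 0 < M.trace) {φ : (Fin n → ℝ) → ℝ}
    (hφ : Continuous φ) {r : ℝ} (hr : 0 < r) (hrD : euclideanClosedBall x₀ r ⊆ D)
    (hlt : ∀ z, (z - x₀) ⬝ᵥ (z - x₀) = r ^ 2 → ⨅ t : I, u (Fin.cons (t : ℝ) z) < φ z) :
    ∃ h : (Fin n → ℝ) → ℝ, ContDiff ℝ 2 h ∧ (∀ x, (M * hessianMatrix h x).trace = 0) ∧
      (∀ x ∈ euclideanClosedBall x₀ r, h x ∈ I) ∧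
      ∀ z, (z - x₀) ⬝ᵥ (z - x₀) = r ^ 2 → u (Fin.cons (h z) z) < φ z := by
  set U : Set (Fin (n + 1) → ℝ) := {y | y 0 ∈ I ∧ Fin.tail y ∈ D}
  have hU : IsOpen U := isOpen_setOf_mem_tail_mem hI hD
  have hfibre {z : Fin n → ℝ} (hz : (z - x₀) ⬝ᵥ (z - x₀) = r ^ 2) (t : ℝ) :
      (Fin.cons t z : Fin (n + 1) → ℝ) ∈ U ↔ t ∈ I := by
    simp only [U, Set.mem_ofPred_eq, Fin.cons_zero, Fin.tail_cons, hrD hz.le, and_true]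
  set W : Set (ℝ × (Fin n → ℝ)) :=
    {p | Fin.cons p.1 p.2 ∈ U ∧ u (Fin.cons p.1 p.2) < φ p.2}
  have hW : IsOpen W := by
    have hφtail : Continuous fun y : Fin (n + 1) → ℝ => φ (Fin.tail y) := hφ.comp (by fun_prop)
    have hcons : Continuous fun p : ℝ × (Fin n → ℝ) => (Fin.cons p.1 p.2 : Fin (n + 1) → ℝ) := by
      fun_prop
    simpa using (isOpen_setOf_lt_coe hU hu.2.1 hφtail).preimage hcons
  have hconv (z) (hz : (z - x₀) ⬝ᵥ (z - x₀) = r ^ 2) : Convex ℝ {t | (t, z) ∈ W} :=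
    hu.convex_setOf_lt hc hU (by simpa only [hfibre hz, Set.ofPred_mem_eq] using hIconv) (φ z)
  have hne (z) (hz : (z - x₀) ⬝ᵥ (z - x₀) = r ^ 2) : ∃ t, (t, z) ∈ W := by
    obtain ⟨t, ht⟩ := iInf_lt_iff.1 (hlt z hz)
    exact ⟨t, (hfibre hz t).2 t.2, ht⟩
  obtain ⟨h, hh, hharm, hmem⟩ := exists_harmonic_forall_mem hM htr hr hW hconv hne
  exact ⟨h, hh, hharm, forall_mem_of_forall_sphere_mem hM htr hh hharm hIconv hr.le
    fun z hz => (hfibre hz _).1 (hmem z hz).1, fun z hz => (hmem z hz).2⟩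

theorem IsTypeF.iInf_le_of_forall_sphere_lt [NeZero n] (hc : (n : ℝ) * π / 2 ≤ c) (hI : IsOpen I)
    (hIconv : Convex ℝ I) (hD : IsOpen D) (hu : IsTypeF (calF n c) {y | y 0 ∈ I ∧ Fin.tail y ∈ D} u)
    (hB : B.IsSymm) (hangle : liftedAngle B < c - π / 2) {φ : (Fin n → ℝ) → ℝ}
    (hφ : ContDiff ℝ 2 φ) (hφB : ∀ x, hessianMatrix φ x = B) {r : ℝ} (hr : 0 < r)
    (hrD : euclideanClosedBall x₀ r ⊆ D)
    (hlt : ∀ z, (z - x₀) ⬝ᵥ (z - x₀) = r ^ 2 → ⨅ t : I, u (Fin.cons (t : ℝ) z) < φ z) :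
    ⨅ t : I, u (Fin.cons (t : ℝ) x₀) ≤ φ x₀ := by
  obtain ⟨M, hM, hMB⟩ := exists_posDef_liftedAngle_sub_le (isHermitian_iff_isSymm.2 hB)
  obtain ⟨h, hh, hharm, hhI, hsphere⟩ := hu.exists_harmonic_graph_lt hc hI hIconv hD hM.posSemidef
    hM.trace_pos hφ.continuous hr hrD hlt
  have hx₀ : x₀ ∈ euclideanClosedBall x₀ r := self_mem_euclideanClosedBall
  calc ⨅ t : I, u (Fin.cons (t : ℝ) x₀)
      ≤ u (Fin.cons (h x₀) x₀) := iInf_le (fun t : I => u (Fin.cons (t : ℝ) x₀)) ⟨_, hhI x₀ hx₀⟩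
    _ ≤ φ x₀ := hu.le_on_graph (isOpen_setOf_mem_tail_mem hI hD) hφ hh
        (fun N hN y _ => hessianMatrix_barrier_notMem_calF hc hangle hMB hφ hh hN
          (hφB _) (hharm _))
        (isCompact_euclideanClosedBall hr.le) (fun x hx => ⟨hhI x hx, hrD hx⟩)
        (fun z hz => hsphere z (dotProduct_sub_self_of_mem_frontier hz)) x₀ hx₀

theorem IsUpperContactJet.mem_Fc (hc : (n : ℝ) * π / 2 ≤ c) (hc' : c < ((n : ℝ) + 1) * π / 2)
    (hI : IsOpen I) (hIconv : Convex ℝ I) (hD : IsOpen D)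
    (hu : IsTypeF (calF n c) {y | y 0 ∈ I ∧ Fin.tail y ∈ D} u) (hx₀ : x₀ ∈ D) {ε : ℝ} (hε : 0 < ε)
    (hB : B.IsSymm)
    (hjet : IsUpperContactJet (fun x => ⨅ t : I, u (Fin.cons (t : ℝ) x)) x₀ L (B - ε • 1)) :
    B ∈ Fc n (c - π / 2) := by
  refine ⟨hB, not_lt.1 fun hangle => ?_⟩
  rcases eq_or_ne n 0 with rfl | hn
  · rw [liftedAngle_eq_sum (isHermitian_iff_isSymm.2 hB), Finset.univ_eq_empty,
      Finset.sum_empty] at hangle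
    norm_num at hc'
    linarith
  have : NeZero n := ⟨hn⟩
  obtain ⟨r, hr, b, hb, hrD, hlt⟩ := hjet.exists_lt_on_sphere hε (hD.mem_nhds hx₀)
  have hle := hu.iInf_le_of_forall_sphere_lt hc hI hIconv hD hB hangle contDiff_quadraticAt
    (hessianMatrix_quadraticAt hB) hr hrD hlt
  rw [quadraticAt_self] at hle
  exact hle.not_gt hb

theorem upperSemicontinuousOn_iInf_cons
    (hu : UpperSemicontinuousOn u {y | y 0 ∈ I ∧ Fin.tail y ∈ D}) :
    UpperSemicontinuousOn (fun x => ⨅ t : I, u (Fin.cons (t : ℝ) x)) D :=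
  upperSemicontinuousOn_iInf fun t =>
    hu.comp (g := fun x : Fin n → ℝ => (Fin.cons (t : ℝ) x : Fin (n + 1) → ℝ)) (by fun_prop)
      fun _ hx => ⟨t.2, hx⟩

end InfimumOverFibres

theorem minimum_principle_general (n : ℕ) (c : ℝ)
    (hc : (n : ℝ) * π / 2 ≤ c) (hc' : c < ((n : ℝ) + 1) * π / 2)
    (I : Set ℝ) (hIopen : IsOpen I) (hIconv : Convex ℝ I) (hIne : I.Nonempty)
    (D : Set (Fin n → ℝ)) (hDopen : IsOpen D) (u : (Fin (n + 1) → ℝ) → EReal)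
    (hu : IsTypeF (calF n c) {y | y 0 ∈ I ∧ Fin.tail y ∈ D} u) :
    IsTypeF (Fc n (c - π / 2)) D (fun x => ⨅ t : I, u (Fin.cons (t : ℝ) x)) := by
  refine .of_isUpperContactJet hDopen (fun x hx => ?_)
    (upperSemicontinuousOn_iInf_cons hu.2.1)
    fun x₀ hx₀ L B ε hε hB hjet => hjet.mem_Fc hc hc' hIopen hIconv hDopen hu hx₀ hε hB
  obtain ⟨t, ht⟩ := hIne
  have hle := iInf_le (fun t : I => u (Fin.cons (t : ℝ) x)) ⟨t, ht⟩
  exact ne_top_of_le_ne_top (hu.1 (Fin.cons t x) ⟨ht, hx⟩) hle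

/-- **Minimum principle for Lagrangian graphs** (Darvas–Rubinstein).
Let `D ⊂ ℝⁿ` be a bounded domain, `I ⊂ ℝ` an open interval, and
`c ∈ [nπ/2, (n+1)π/2)`.  If `u ∈ ℱ_c(I × D)` then the function
`v(x) := inf_{t ∈ I} u(t,x)` belongs to `F_{c - π/2}(D)` (as an `EReal`-valued
function; in particular the constant `−∞` function is of type `F_{c-π/2}` by convention). -/
theorem minimum_principle (n : ℕ) (c : ℝ)
    (hc : (n : ℝ) * π / 2 ≤ c) (hc' : c < ((n : ℝ) + 1) * π / 2)
    (I : Set ℝ) (hIopen : IsOpen I) (hIconv : Convex ℝ I) (hIne : I.Nonempty)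
    (D : Set (Fin n → ℝ)) (hDopen : IsOpen D) (hDconn : IsConnected D)
    (hDbdd : Bornology.IsBounded D)
    (u : (Fin (n+1) → ℝ) → EReal)
    (hu : IsTypeF (calF n c) {y | y 0 ∈ I ∧ Fin.tail y ∈ D} u) :
    IsTypeF (Fc n (c - π / 2)) D (fun x => ⨅ t : I, u (Fin.cons (t : ℝ) x)) :=
  minimum_principle_general n c hc hc' I hIopen hIconv hIne D hDopen u hu
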